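/- Let 𝒜 : ℝ^{n₁×n₂} → ℝ^m be a random linear operator represented by matrices A₁,…,A_m whose entries are i.i.d. standard Gaussian N(0,1) random variables, let τ ∈ [1, n₁] and ε ∈ (0,1). If m ≥ 36 τ n₂ / ε², then Pr[ρ_τ^max(𝒜/√m) > 1 + ε] ≤ exp(−m ε²/8) and Pr[ρ_τ^min(𝒜/√m) < 1 − ε] ≤ exp(−m ε²/8). -/

import Mathlib

open scoped BigOperators

noncomputable section

/-- Frobenius norm of a real matrix. -/
def frobNorm {n₁ n₂ : ℕ} (X : Matrix (Fin n₁) (Fin n₂) ℝ) : ℝ :=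
  Real.sqrt (∑ i, ∑ j, (X i j) ^ 2)

/-- Singular values of a real matrix: square roots of eigenvalues of `X * Xᴴ`. -/
def singVals {n₁ n₂ : ℕ} (X : Matrix (Fin n₁) (Fin n₂) ℝ) : Fin n₁ → ℝ :=
  fun i => Real.sqrt ((Matrix.isHermitian_mul_conjTranspose_self X).eigenvalues i)

/-- Nuclear norm: sum of singular values. -/
def nuclearNorm {n₁ n₂ : ℕ} (X : Matrix (Fin n₁) (Fin n₂) ℝ) : ℝ :=
  ∑ i, singVals X i

/-- Operator norm: largest singular value. -/
def matOpNorm {n₁ n₂ : ℕ} (X : Matrix (Fin n₁) (Fin n₂) ℝ) : ℝ :=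
  ⨆ i, singVals X i

/-- ℓ*-rank. -/
def lstarRank {n₁ n₂ : ℕ} (X : Matrix (Fin n₁) (Fin n₂) ℝ) : ℝ :=
  nuclearNorm X ^ 2 / frobNorm X ^ 2

/-- Euclidean norm of a vector. -/
def vnorm {m : ℕ} (v : Fin m → ℝ) : ℝ :=
  Real.sqrt (∑ k, (v k) ^ 2)

/-- Matrix inner product. -/
def matInner {n₁ n₂ : ℕ} (X Y : Matrix (Fin n₁) (Fin n₂) ℝ) : ℝ :=
  (X.transpose * Y).trace

def cmsvMin {n₁ n₂ m : ℕ} (A : Matrix (Fin n₁) (Fin n₂) ℝ → (Fin m → ℝ)) (τ : ℝ) : ℝ :=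
  sInf {c | ∃ X : Matrix (Fin n₁) (Fin n₂) ℝ, X ≠ 0 ∧ lstarRank X ≤ τ ∧ c = vnorm (A X) / frobNorm X}

def cmsvMax {n₁ n₂ m : ℕ} (A : Matrix (Fin n₁) (Fin n₂) ℝ → (Fin m → ℝ)) (τ : ℝ) : ℝ :=
  sSup {c | ∃ X : Matrix (Fin n₁) (Fin n₂) ℝ, X ≠ 0 ∧ lstarRank X ≤ τ ∧ c = vnorm (A X) / frobNorm X}

def rcsvMin {n₁ n₂ m : ℕ} (A : Matrix (Fin n₁) (Fin n₂) ℝ → (Fin m → ℝ)) (r : ℕ) : ℝ :=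
  sInf {c | ∃ X : Matrix (Fin n₁) (Fin n₂) ℝ, X ≠ 0 ∧ X.rank ≤ r ∧ c = vnorm (A X) / frobNorm X}

def rcsvMax {n₁ n₂ m : ℕ} (A : Matrix (Fin n₁) (Fin n₂) ℝ → (Fin m → ℝ)) (r : ℕ) : ℝ :=
  sSup {c | ∃ X : Matrix (Fin n₁) (Fin n₂) ℝ, X ≠ 0 ∧ X.rank ≤ r ∧ c = vnorm (A X) / frobNorm X}

def mRIC {n₁ n₂ m : ℕ} (A : Matrix (Fin n₁) (Fin n₂) ℝ → (Fin m → ℝ)) (r : ℕ) : ℝ :=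
  sInf {δ : ℝ | 0 < δ ∧ ∀ X : Matrix (Fin n₁) (Fin n₂) ℝ, X ≠ 0 → X.rank ≤ r →
    1 - δ ≤ (vnorm (A X)) ^ 2 / (frobNorm X) ^ 2 ∧ (vnorm (A X)) ^ 2 / (frobNorm X) ^ 2 ≤ 1 + δ}

def opOf {n₁ n₂ m : ℕ} (A : Fin m → Matrix (Fin n₁) (Fin n₂) ℝ) :
    Matrix (Fin n₁) (Fin n₂) ℝ → (Fin m → ℝ) :=
  fun X k => matInner (A k) X


open MeasureTheory ProbabilityTheory

/-- The Gaussian ensemble: all entries of the `m` representing matrices are i.i.d. `N(0,1)`. -/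
def gaussianEnsemble (m n₁ n₂ : ℕ) : Measure ((Fin m × Fin n₁ × Fin n₂) → ℝ) :=
  Measure.pi fun _ => gaussianReal 0 1

/-- The collection of representing matrices determined by a sample `ω`. -/
def ensembleMatrices {m n₁ n₂ : ℕ} (ω : (Fin m × Fin n₁ × Fin n₂) → ℝ) :
    Fin m → Matrix (Fin n₁) (Fin n₂) ℝ :=
  fun k => Matrix.of fun i j => ω (k, i, j)

/-- The scaled operator `𝒜/√m` determined by a sample `ω`. -/
def scaledOp {m n₁ n₂ : ℕ} (ω : (Fin m × Fin n₁ × Fin n₂) → ℝ) :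
    Matrix (Fin n₁) (Fin n₂) ℝ → (Fin m → ℝ) :=
  fun X k => opOf (ensembleMatrices ω) X k / Real.sqrt m

/-!
Restricted to unit vectors `x`, the extremes of `‖A x‖` are min-max values of the Gaussian process
`(u, x) ↦ ⟪u, A x⟫`, which Gordon's inequality compares with `⟪u, g⟫ + ⟪x, G⟫` for independent
Gaussian vectors `g` and `G`. Interpolating between two Gaussian vectors along a rotation and
integrating by parts proves the inequality at the level of moment generating functions, for the
log-sum-exp smoothings of the min-max.

Concentration of measure is replaced by a replica argument: the same interpolation compares `n`
copies of one Gaussian supremum `S` with `n` independent ones, so that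
`E exp (t S) ≤ exp (t² / 2) (E exp (t S / n)) ^ n`, and `n → ∞` gives
`E exp (t S) ≤ exp (t² / 2 + t E S)`. For `S = ‖g‖` this forces `Var ‖g‖ ≤ 1`, so that `E ‖g‖` is
within `1 / √m` of `√m`.

It remains to bound `E sup ⟪x, G⟫` over the matrices with Frobenius norm one and `ℓ*`-rank at most
`τ`. By the duality of the nuclear and the operator norm it is at most `√τ E ‖G‖`, and Gordon's
inequality for the suprema gives Chevet's bound `E ‖G‖ ≤ √n₁ + √n₂`. Chernoff's bound concludes.
-/

/-- The standard Gaussian measure on `ι → ℝ`. -/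
abbrev stdGaussianPi (ι : Type*) [Fintype ι] : Measure (ι → ℝ) :=
  Measure.pi fun _ => gaussianReal 0 1

/-- Being Lipschitz for some unspecified constant. -/
def IsLipschitz {E F : Type*} [PseudoEMetricSpace E] [PseudoEMetricSpace F] (f : E → F) : Prop :=
  ∃ K, LipschitzWith K f

namespace IsLipschitz

lemma comp {E F G : Type*} [PseudoEMetricSpace E] [PseudoEMetricSpace F] [PseudoEMetricSpace G]
    {f : F → G} {g : E → F} (hf : IsLipschitz f) (hg : IsLipschitz g) :
    IsLipschitz fun x => f (g x) :=
  let ⟨_, hf⟩ := hf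
  let ⟨_, hg⟩ := hg
  ⟨_, hf.comp hg⟩

lemma continuous {E F : Type*} [PseudoEMetricSpace E] [PseudoEMetricSpace F] {f : E → F}
    (hf : IsLipschitz f) : Continuous f :=
  let ⟨_, hf⟩ := hf
  hf.continuous

lemma pi {E κ : Type*} [PseudoEMetricSpace E] [Fintype κ] {f : E → κ → ℝ}
    (hf : ∀ k, IsLipschitz fun x => f x k) : IsLipschitz f := by
  choose K hK using hf
  refine ⟨∑ k, K k, fun x y => edist_pi_le_iff.2 fun k => (hK k x y).trans ?_⟩
  gcongr
  exact Finset.single_le_sum (f := K) (fun _ _ => zero_le) (Finset.mem_univ k)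

lemma of_linearMap {E F : Type*} [NormedAddCommGroup E] [NormedSpace ℝ E] [FiniteDimensional ℝ E]
    [NormedAddCommGroup F] [NormedSpace ℝ F] (L : E →ₗ[ℝ] F) : IsLipschitz L :=
  ⟨_, (LinearMap.toContinuousLinearMap L).lipschitz⟩

lemma norm {E F : Type*} [PseudoEMetricSpace E] [NormedAddCommGroup F] {f : E → F}
    (hf : IsLipschitz f) : IsLipschitz fun x => ‖f x‖ :=
  comp ⟨1, lipschitzWith_one_norm⟩ hf

lemma const_mul {E : Type*} [PseudoEMetricSpace E] {f : E → ℝ} (c : ℝ) (hf : IsLipschitz f) :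
    IsLipschitz fun x => c * f x :=
  (of_linearMap (LinearMap.mulLeft ℝ c)).comp hf

end IsLipschitz

lemma abs_iSup_sub_iSup_le {κ : Type*} [Finite κ] [Nonempty κ] {f g : κ → ℝ} {δ : ℝ}
    (h : ∀ k, |f k - g k| ≤ δ) : |(⨆ k, f k) - ⨆ k, g k| ≤ δ := by
  have one_sided (f g : κ → ℝ) (h : ∀ k, f k ≤ g k + δ) : (⨆ k, f k) ≤ (⨆ k, g k) + δ :=
    ciSup_le fun k => (h k).trans (by gcongr; exact le_ciSup (Set.finite_range g).bddAbove k)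
  rw [abs_le']
  constructor
  · linarith [one_sided f g fun k => by linarith [(abs_le.1 (h k)).2]]
  · linarith [one_sided g f fun k => by linarith [(abs_le.1 (h k)).1]]

lemma IsLipschitz.iSup {E κ : Type*} [PseudoEMetricSpace E] [Finite κ] [Nonempty κ]
    {f : κ → E → ℝ} (hf : ∀ k, IsLipschitz (f k)) : IsLipschitz fun x => ⨆ k, f k x := by
  cases nonempty_fintype κ
  have sup_lipschitz : LipschitzWith 1 fun y : κ → ℝ => ⨆ k, y k :=
    .mk_one fun y z => abs_iSup_sub_iSup_le fun k => dist_le_pi_dist y z k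
  exact comp ⟨1, sup_lipschitz⟩ (pi hf)

/-- At most exponential growth of a real function on a normed space. -/
def HasExpGrowth {E : Type*} [NormedAddCommGroup E] (f : E → ℝ) : Prop :=
  ∃ c C : ℝ, 0 ≤ c ∧ 0 ≤ C ∧ ∀ x, |f x| ≤ C * Real.exp (c * ‖x‖)

namespace HasExpGrowth

variable {E F : Type*} [NormedAddCommGroup E] [NormedAddCommGroup F]

lemma of_bounded {f : E → ℝ} (C : ℝ) (h : ∀ x, |f x| ≤ C) : HasExpGrowth f :=
  ⟨0, C, le_rfl, (abs_nonneg _).trans (h 0), fun x => by simpa using h x⟩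

lemma mul {f g : E → ℝ} (hf : HasExpGrowth f) (hg : HasExpGrowth g) :
    HasExpGrowth fun x => f x * g x := by
  obtain ⟨c, C, hc, hC, hb⟩ := hf
  obtain ⟨d, D, hd, hD, hb'⟩ := hg
  refine ⟨c + d, C * D, by positivity, by positivity, fun x => ?_⟩
  rw [abs_mul, add_mul, Real.exp_add]
  calc |f x| * |g x| ≤ (C * Real.exp (c * ‖x‖)) * (D * Real.exp (d * ‖x‖)) :=
        mul_le_mul (hb x) (hb' x) (abs_nonneg _) (by positivity)
    _ = _ := by ring

lemma add {f g : E → ℝ} (hf : HasExpGrowth f) (hg : HasExpGrowth g) :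
    HasExpGrowth fun x => f x + g x := by
  obtain ⟨c, C, hc, hC, hb⟩ := hf
  obtain ⟨d, D, hd, hD, hb'⟩ := hg
  refine ⟨c + d, C + D, by positivity, by positivity, fun x => ?_⟩
  calc |f x + g x| ≤ |f x| + |g x| := abs_add_le _ _
    _ ≤ C * Real.exp (c * ‖x‖) + D * Real.exp (d * ‖x‖) := add_le_add (hb x) (hb' x)
    _ ≤ C * Real.exp ((c + d) * ‖x‖) + D * Real.exp ((c + d) * ‖x‖) := by
        gcongr <;> linarith
    _ = _ := by ring

lemma sum {κ : Type*} (s : Finset κ) {f : κ → E → ℝ} (h : ∀ i ∈ s, HasExpGrowth (f i)) :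
    HasExpGrowth fun x => ∑ i ∈ s, f i x := by
  classical
  induction s using Finset.induction_on with
  | empty => exact of_bounded 0 (by simp)
  | insert i s hi ih =>
    simp only [Finset.sum_insert hi]
    exact (h i (by simp)).add (ih fun j hj => h j (by simp [hj]))

lemma comp {f : F → ℝ} {g : E → F} (hf : HasExpGrowth f) (hg : IsLipschitz g) :
    HasExpGrowth fun x => f (g x) := by
  obtain ⟨c, C, hc, hC, hb⟩ := hf
  obtain ⟨K, hK⟩ := hg
  refine ⟨c * K, C * Real.exp (c * ‖g 0‖), by positivity, by positivity, fun x => (hb _).trans ?_⟩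
  have : ‖g x‖ ≤ ‖g 0‖ + K * ‖x‖ := by
    linarith [norm_le_norm_add_norm_sub' (g x) (g 0), sub_zero x ▸ hK.norm_sub_le x 0]
  rw [mul_assoc, ← Real.exp_add, mul_assoc, ← mul_add]
  gcongr

lemma id : HasExpGrowth fun t : ℝ => t :=
  ⟨1, 1, zero_le_one, zero_le_one, fun t => by
    simpa using (le_add_of_nonneg_right zero_le_one).trans (Real.add_one_le_exp |t|)⟩

lemma of_isLipschitz {f : E → ℝ} (hf : IsLipschitz f) : HasExpGrowth f :=
  id.comp hf

lemma exp : HasExpGrowth Real.exp :=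
  ⟨1, 1, zero_le_one, zero_le_one, fun t => by simpa using le_abs_self t⟩

lemma integrable {ι : Type*} [Fintype ι] {f : (ι → ℝ) → ℝ} (hf : HasExpGrowth f)
    (hm : Measurable f) : Integrable f (stdGaussianPi ι) := by
  obtain ⟨c, C, hc, hC, hb⟩ := hf
  have one_dim : Integrable (fun x : ℝ => Real.exp (c * |x|)) (gaussianReal 0 1) :=
    integrable_exp_mul_abs (integrable_exp_mul_gaussianReal c)
      (integrable_exp_mul_gaussianReal (-c))
  have product : Integrable (fun x : ι → ℝ => ∏ i, Real.exp (c * |x i|)) (stdGaussianPi ι) :=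
    Integrable.fintype_prod (f := fun _ (y : ℝ) => Real.exp (c * |y|)) fun _ => one_dim
  refine (product.const_mul C).mono' hm.aestronglyMeasurable (.of_forall fun x => (hb x).trans ?_)
  rw [← Real.exp_sum, ← Finset.mul_sum]
  gcongr
  refine (pi_norm_le_iff_of_nonneg (Finset.sum_nonneg fun i _ => abs_nonneg _)).2 fun i => ?_
  exact Finset.single_le_sum (f := fun i => |x i|) (fun i _ => abs_nonneg _) (Finset.mem_univ i)

lemma integrable_gaussianReal {f : ℝ → ℝ} (hf : HasExpGrowth f) (hm : Measurable f) :
    Integrable f (gaussianReal 0 1) := by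
  obtain ⟨c, C, -, -, hb⟩ := hf
  exact ((integrable_exp_mul_abs (integrable_exp_mul_gaussianReal c)
    (integrable_exp_mul_gaussianReal (-c))).const_mul C).mono' hm.aestronglyMeasurable
      (.of_forall hb)

lemma update {ι : Type*} [Fintype ι] [DecidableEq ι] {f : (ι → ℝ) → ℝ} (hf : HasExpGrowth f)
    (x : ι → ℝ) (k : ι) : HasExpGrowth fun t => f (Function.update x k t) := by
  refine hf.comp ⟨1, .mk_one fun s t => (dist_pi_le_iff dist_nonneg).2 fun i => ?_⟩
  rcases eq_or_ne i k with rfl | hi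
  · simp
  · simp [Function.update_of_ne hi]

end HasExpGrowth

lemma IsLipschitz.integrable {ι : Type*} [Fintype ι] {f : (ι → ℝ) → ℝ} (hf : IsLipschitz f) :
    Integrable f (stdGaussianPi ι) :=
  (HasExpGrowth.of_isLipschitz hf).integrable hf.continuous.measurable

lemma IsLipschitz.integrable_exp {ι : Type*} [Fintype ι] {f : (ι → ℝ) → ℝ} (hf : IsLipschitz f) :
    Integrable (fun ω => Real.exp (f ω)) (stdGaussianPi ι) :=
  (HasExpGrowth.exp.comp hf).integrable hf.continuous.rexp.measurable

lemma hasDerivAt_gaussianPDFReal (x : ℝ) :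
    HasDerivAt (gaussianPDFReal 0 1) (-(x * gaussianPDFReal 0 1 x)) x := by
  have exponent : HasDerivAt (fun x : ℝ => -(x - 0) ^ 2 / (2 * ((1 : NNReal) : ℝ))) (-x) x :=
    ((((hasDerivAt_id x).sub_const 0).pow 2).neg.div_const
      (2 * ((1 : NNReal) : ℝ))).congr_deriv (by simp; ring)
  rw [gaussianPDFReal_def]
  exact (exponent.exp.const_mul (Real.sqrt (2 * Real.pi * ((1 : NNReal) : ℝ)))⁻¹).congr_deriv
    (by ring)

lemma integrable_gaussianPDFReal_mul_iff {g : ℝ → ℝ} :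
    Integrable (fun x => gaussianPDFReal 0 1 x * g x) ↔ Integrable g (gaussianReal 0 1) := by
  rw [gaussianReal_of_var_ne_zero _ one_ne_zero, gaussianPDF_def,
    integrable_withDensity_iff_integrable_smul₀' (by fun_prop) (by simp)]
  simp [ENNReal.toReal_ofReal (gaussianPDFReal_nonneg 0 1 _)]

theorem integral_id_mul_gaussianReal {f f' : ℝ → ℝ} (hd : ∀ x, HasDerivAt f (f' x) x)
    (hf : HasExpGrowth f) (hf' : HasExpGrowth f') (hm' : Measurable f') :
    ∫ x, x * f x ∂gaussianReal 0 1 = ∫ x, f' x ∂gaussianReal 0 1 := by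
  have hm : Measurable f :=
    (continuous_iff_continuousAt.2 fun x => (hd x).continuousAt).measurable
  have int_deriv := integrable_gaussianPDFReal_mul_iff.2
    ((HasExpGrowth.id.mul hf).integrable_gaussianReal (measurable_id.mul hm))
  have by_parts := integral_mul_deriv_eq_deriv_mul_of_integrable
    (fun x _ => hasDerivAt_gaussianPDFReal x) (fun x _ => hd x)
    (integrable_gaussianPDFReal_mul_iff.2 (hf'.integrable_gaussianReal hm'))
    (int_deriv.neg.congr (.of_forall fun x => by
      simp only [Pi.neg_apply, Pi.mul_apply]; ring))
    (integrable_gaussianPDFReal_mul_iff.2 (hf.integrable_gaussianReal hm))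
  simp only [integral_gaussianReal_eq_integral_smul one_ne_zero, smul_eq_mul]
  rw [by_parts, ← integral_neg]
  congr 1 with x
  ring

lemma measurePreserving_update_pi {ι : Type*} [Fintype ι] [DecidableEq ι] {X : ι → Type*}
    [∀ i, MeasurableSpace (X i)] (μ : ∀ i, Measure (X i)) [∀ i, IsProbabilityMeasure (μ i)]
    (k : ι) :
    MeasurePreserving (fun p : (∀ i, X i) × X k => Function.update p.1 k p.2)
      ((Measure.pi μ).prod (μ k)) (Measure.pi μ) := by
  have hm : Measurable fun p : (∀ i, X i) × X k => Function.update p.1 k p.2 := measurable_update'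
  refine ⟨hm, (Measure.pi_eq fun s hs => ?_).symm⟩
  have preimage : (fun p : (∀ i, X i) × X k => Function.update p.1 k p.2) ⁻¹' Set.univ.pi s =
      (Set.univ.pi (Function.update s k Set.univ)) ×ˢ s k := by
    ext p
    simp only [Set.mem_preimage, Set.mem_univ_pi, Set.mem_prod]
    rw [Function.forall_update_iff p.1 fun i x => x ∈ s i,
      Function.forall_update_iff s fun i t => p.1 i ∈ t]
    simp [and_comm]
  rw [Measure.map_apply hm (.univ_pi hs), preimage, Measure.prod_prod, Measure.pi_pi,
    ← Finset.mul_prod_erase _ _ (Finset.mem_univ k),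
    ← Finset.mul_prod_erase _ (fun i => μ i (s i)) (Finset.mem_univ k), Function.update_self,
    measure_univ, one_mul, mul_comm]
  congr 1
  exact Finset.prod_congr rfl fun i hi => by rw [Function.update_of_ne (Finset.ne_of_mem_erase hi)]

theorem integral_apply_mul_stdGaussianPi {ι : Type*} [Fintype ι] [DecidableEq ι] (k : ι)
    {f f' : (ι → ℝ) → ℝ}
    (hd : ∀ x, HasDerivAt (fun t => f (Function.update x k t)) (f' x) (x k))
    (hf : HasExpGrowth f) (hf' : HasExpGrowth f') (hm : Measurable f) (hm' : Measurable f') :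
    ∫ x, x k * f x ∂stdGaussianPi ι = ∫ x, f' x ∂stdGaussianPi ι := by
  have resample : ∀ g : (ι → ℝ) → ℝ, HasExpGrowth g → Measurable g →
      ∫ x, g x ∂stdGaussianPi ι =
        ∫ x, ∫ t, g (Function.update x k t) ∂gaussianReal 0 1 ∂stdGaussianPi ι := by
    intro g hg hgm
    have hmp : MeasurePreserving (fun p : (ι → ℝ) × ℝ => Function.update p.1 k p.2)
        ((stdGaussianPi ι).prod (gaussianReal 0 1)) (stdGaussianPi ι) :=
      measurePreserving_update_pi _ k
    rw [← hmp.map_eq, integral_map hmp.aemeasurable hgm.aestronglyMeasurable, integral_prod,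
      hmp.map_eq]
    exact (hmp.integrable_comp hgm.aestronglyMeasurable).2 (hg.integrable hgm)
  rw [resample _ ((HasExpGrowth.of_isLipschitz ⟨1, .eval k⟩).mul hf)
    ((measurable_pi_apply k).mul hm), resample _ hf' hm']
  congr 1 with x
  simp only [Function.update_self]
  refine integral_id_mul_gaussianReal (fun t => ?_) (hf.update x k) (hf'.update x k)
    (hm'.comp (measurable_update x))
  simpa using hd (Function.update x k t)

open scoped Matrix

/-- `p` is the gradient of `f` at `y`, in coordinates. -/
def HasGrad {I : Type*} [Fintype I] (f : (I → ℝ) → ℝ) (p y : I → ℝ) : Prop :=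
  HasFDerivAt f (∑ i, p i • ContinuousLinearMap.proj (R := ℝ) (φ := fun _ : I => ℝ) i) y

namespace HasGrad

variable {I K : Type*} [Fintype I] [Fintype K] {f g : (I → ℝ) → ℝ} {p q y : I → ℝ}

lemma hasFDerivAt (h : HasGrad f p y) :
    HasFDerivAt f (∑ i, p i • ContinuousLinearMap.proj (R := ℝ) (φ := fun _ : I => ℝ) i) y := h

lemma congr_grad (h : HasGrad f p y) (hpq : ∀ i, p i = q i) : HasGrad f q y := by
  rwa [← funext hpq]

lemma comp_hasDerivAt {w : ℝ → I → ℝ} {w' : I → ℝ} {θ : ℝ} (h : HasGrad f p (w θ))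
    (hw : HasDerivAt w w' θ) : HasDerivAt (fun θ => f (w θ)) (p ⬝ᵥ w') θ :=
  (h.hasFDerivAt.comp_hasDerivAt θ hw).congr_deriv (by simp [dotProduct])

lemma add (hf : HasGrad f p y) (hg : HasGrad g q y) :
    HasGrad (fun y => f y + g y) (fun i => p i + q i) y := by
  refine (hf.hasFDerivAt.add hg.hasFDerivAt).congr_fderiv ?_
  ext v
  simp [Finset.sum_add_distrib, add_mul]

lemma mul (hf : HasGrad f p y) (hg : HasGrad g q y) :
    HasGrad (fun y => f y * g y) (fun i => f y * q i + g y * p i) y := by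
  refine (hf.hasFDerivAt.mul hg.hasFDerivAt).congr_fderiv ?_
  ext v
  simp [Finset.mul_sum, Finset.sum_add_distrib, add_mul, mul_assoc]

lemma const_mul (c : ℝ) (hf : HasGrad f p y) : HasGrad (fun y => c * f y) (fun i => c * p i) y := by
  refine (hf.hasFDerivAt.const_mul c).congr_fderiv ?_
  ext v
  simp [Finset.mul_sum, mul_assoc]

lemma exp (hf : HasGrad f p y) :
    HasGrad (fun y => Real.exp (f y)) (fun i => Real.exp (f y) * p i) y := by
  refine hf.hasFDerivAt.exp.congr_fderiv ?_
  ext v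
  simp [Finset.mul_sum, mul_assoc]

lemma log (hf : HasGrad f p y) (h0 : f y ≠ 0) :
    HasGrad (fun y => Real.log (f y)) (fun i => (f y)⁻¹ * p i) y := by
  refine (hf.hasFDerivAt.log h0).congr_fderiv ?_
  ext v
  simp [Finset.mul_sum, mul_assoc]

lemma sum {F : K → (I → ℝ) → ℝ} {P : K → I → ℝ} (h : ∀ k, HasGrad (F k) (P k) y) :
    HasGrad (fun y => ∑ k, F k y) (fun i => ∑ k, P k i) y := by
  refine (HasFDerivAt.fun_sum fun k _ => (h k).hasFDerivAt).congr_fderiv ?_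
  ext v
  simp only [_root_.sum_apply, _root_.smul_apply, ContinuousLinearMap.proj_apply,
    smul_eq_mul, Finset.sum_mul]
  exact Finset.sum_comm

lemma apply [DecidableEq I] (i : I) : HasGrad (fun y : I → ℝ => y i) (Pi.single i 1) y := by
  refine (hasFDerivAt_apply i y).congr_fderiv ?_
  ext v
  simp [Pi.single_apply]

lemma comp {F : (K → ℝ) → ℝ} {P : K → ℝ} {G : (I → ℝ) → K → ℝ} {Q : K → I → ℝ}
    (hF : HasGrad F P (G y)) (hG : ∀ k, HasGrad (fun y => G y k) (Q k) y) :
    HasGrad (fun y => F (G y)) (fun i => ∑ k, P k * Q k i) y := by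
  refine (hF.hasFDerivAt.comp y (hasFDerivAt_pi.2 fun k => (hG k).hasFDerivAt)).congr_fderiv ?_
  ext v
  simp only [ContinuousLinearMap.comp_apply, _root_.sum_apply, _root_.smul_apply,
    ContinuousLinearMap.proj_apply, ContinuousLinearMap.pi_apply, smul_eq_mul, Finset.sum_mul,
    Finset.mul_sum]
  rw [Finset.sum_comm]
  exact Finset.sum_congr rfl fun i _ => Finset.sum_congr rfl fun k _ => by ring

lemma comp_row [DecidableEq K] {y : K × I → ℝ} (k : K) (hf : HasGrad f p fun i => y (k, i)) :
    HasGrad (fun y : K × I → ℝ => f fun i => y (k, i))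
      (fun q => if k = q.1 then p q.2 else 0) y := by
  classical
  refine (HasGrad.comp (G := fun y : K × I → ℝ => fun i => y (k, i)) hf
    fun i => HasGrad.apply (k, i)).congr_grad fun ⟨l, j⟩ => ?_
  simp only [Pi.single_apply, Prod.mk.injEq, mul_ite, mul_one, mul_zero]
  rcases eq_or_ne k l with rfl | h
  · simp
  · simp [h, h.symm]

lemma continuous {p : (I → ℝ) → I → ℝ} (h : ∀ y, HasGrad f (p y) y) : Continuous f :=
  continuous_iff_continuousAt.2 fun y => (h y).hasFDerivAt.continuousAt

lemma isLipschitz {p : (I → ℝ) → I → ℝ} {C : ℝ} (h : ∀ y, HasGrad f (p y) y)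
    (hC : ∀ y i, |p y i| ≤ C) : IsLipschitz f := by
  refine ⟨(Fintype.card I * C).toNNReal, lipschitzWith_of_nnnorm_fderiv_le
    (fun y => (h y).hasFDerivAt.differentiableAt) fun y => ?_⟩
  rw [(h y).hasFDerivAt.fderiv, ← norm_toNNReal]
  refine Real.toNNReal_le_toNNReal ((norm_sum_le _ _).trans ?_)
  refine (Finset.sum_le_card_nsmul _ _ C fun i _ => ?_).trans_eq (by simp)
  rw [norm_smul]
  refine (mul_le_of_le_one_right (norm_nonneg _) ?_).trans (hC y i)
  exact ContinuousLinearMap.opNorm_le_bound _ zero_le_one fun v => by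
    simpa using norm_le_pi_norm v i

end HasGrad

lemma IsLipschitz.mulVec {I J : Type*} [Fintype I] [Fintype J] (C : Matrix I J ℝ) :
    IsLipschitz fun ω => C *ᵥ ω :=
  .of_linearMap C.mulVecLin

/-- `Ψ` is twice continuously differentiable, with gradient `P` and Hessian `H` in coordinates. -/
structure HasHessian {I : Type*} [Fintype I] (Ψ : (I → ℝ) → ℝ) (P : (I → ℝ) → I → ℝ)
    (H : (I → ℝ) → I → I → ℝ) : Prop where
  hasGrad : ∀ y, HasGrad Ψ (P y) y
  hasGrad_grad : ∀ i y, HasGrad (fun y => P y i) (H y i) y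
  continuous_hess : ∀ i j, Continuous fun y => H y i j

section GaussianComparison

variable {I J : Type*} [Fintype J]

/-- The path of Gaussian vectors `rotate a b θ *ᵥ ω` from `b *ᵥ ω` to `a *ᵥ ω`. Its derivative in
`θ` is the same path a quarter turn later. -/
def rotate (a b : Matrix I J ℝ) (θ : ℝ) : Matrix I J ℝ :=
  Real.cos θ • b + Real.sin θ • a

lemma rotate_mulVec (a b : Matrix I J ℝ) (θ : ℝ) (ω : J → ℝ) :
    rotate a b θ *ᵥ ω = Real.cos θ • b *ᵥ ω + Real.sin θ • a *ᵥ ω := by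
  simp only [rotate, Matrix.add_mulVec, Matrix.smul_mulVec]

lemma rotate_mul_transpose (a b : Matrix I J ℝ) (hab : a * bᵀ = 0) (θ : ℝ) :
    rotate a b (θ + Real.pi / 2) * (rotate a b θ)ᵀ =
      (Real.sin θ * Real.cos θ) • (a * aᵀ - b * bᵀ) := by
  have hba : b * aᵀ = 0 := by simpa using congrArg Matrix.transpose hab
  simp only [rotate, Real.cos_add_pi_div_two, Real.sin_add_pi_div_two, Matrix.transpose_add,
    Matrix.transpose_smul, Matrix.add_mul, Matrix.mul_add, Matrix.smul_mul, Matrix.mul_smul,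
    hab, hba]
  module

lemma hasDerivAt_rotate_mulVec [Finite I] (a b : Matrix I J ℝ) (ω : J → ℝ) (θ : ℝ) :
    HasDerivAt (fun θ => rotate a b θ *ᵥ ω) (rotate a b (θ + Real.pi / 2) *ᵥ ω) θ := by
  cases nonempty_fintype I
  simp only [rotate_mulVec, Real.cos_add_pi_div_two, Real.sin_add_pi_div_two]
  exact ((Real.hasDerivAt_cos θ).smul_const _).add ((Real.hasDerivAt_sin θ).smul_const _)

variable [Fintype I]

lemma integral_apply_mul_comp_mulVec {f : (I → ℝ) → ℝ} {p : (I → ℝ) → I → ℝ}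
    (hf : ∀ y, HasGrad f (p y) y) (cp : ∀ j, Continuous fun y => p y j) (gf : HasExpGrowth f)
    (gp : ∀ j, HasExpGrowth fun y => p y j) (C : Matrix I J ℝ) (k : J) :
    ∫ ω, ω k * f (C *ᵥ ω) ∂stdGaussianPi J =
      ∑ j, C j k * ∫ ω, p (C *ᵥ ω) j ∂stdGaussianPi J := by
  classical
  have cC : Continuous fun ω => C *ᵥ ω := (IsLipschitz.mulVec C).continuous
  have mf : Measurable fun ω => f (C *ᵥ ω) := ((HasGrad.continuous hf).comp cC).measurable
  have ip (j : I) : Integrable (fun ω => p (C *ᵥ ω) j) (stdGaussianPi J) :=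
    ((gp j).comp (.mulVec C)).integrable ((cp j).comp cC).measurable
  have partial_deriv (ω : J → ℝ) : HasDerivAt (fun t => f (C *ᵥ Function.update ω k t))
      (∑ j, p (C *ᵥ ω) j * C j k) (ω k) := by
    have hw := (LinearMap.toContinuousLinearMap C.mulVecLin).hasFDerivAt.comp_hasDerivAt (ω k)
      (hasDerivAt_update ω k (ω k))
    refine (HasGrad.comp_hasDerivAt (w := fun t => C *ᵥ Function.update ω k t)
      (hf _) hw).congr_deriv ?_
    simp [dotProduct]
  have growth : HasExpGrowth fun ω => ∑ j, p (C *ᵥ ω) j * C j k :=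
    .sum _ fun j _ => ((gp j).comp (.mulVec C)).mul (.of_bounded |C j k| fun _ => le_rfl)
  have meas : Measurable fun ω => ∑ j, p (C *ᵥ ω) j * C j k :=
    Finset.measurable_sum _ fun j _ => ((cp j).comp cC).measurable.mul_const _
  rw [integral_apply_mul_stdGaussianPi k partial_deriv (gf.comp (.mulVec C)) growth mf meas,
    integral_finsetSum _ fun j _ => (ip j).mul_const _]
  exact Finset.sum_congr rfl fun j _ => by rw [integral_mul_const, mul_comm]

lemma integral_mulVec_apply_mul {f : (I → ℝ) → ℝ} {p : (I → ℝ) → I → ℝ}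
    (hf : ∀ y, HasGrad f (p y) y) (cp : ∀ j, Continuous fun y => p y j) (gf : HasExpGrowth f)
    (gp : ∀ j, HasExpGrowth fun y => p y j) (C C' : Matrix I J ℝ) (i : I) :
    ∫ ω, (C' *ᵥ ω) i * f (C *ᵥ ω) ∂stdGaussianPi J =
      ∑ j, (C' * Cᵀ) i j * ∫ ω, p (C *ᵥ ω) j ∂stdGaussianPi J := by
  have integrable_term (k : J) : Integrable (fun ω => ω k * f (C *ᵥ ω)) (stdGaussianPi J) :=
    ((HasExpGrowth.of_isLipschitz ⟨1, .eval k⟩).mul (gf.comp (.mulVec C))).integrable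
      ((measurable_pi_apply k).mul
        ((HasGrad.continuous hf).comp (IsLipschitz.mulVec C).continuous).measurable)
  calc ∫ ω, (C' *ᵥ ω) i * f (C *ᵥ ω) ∂stdGaussianPi J
      = ∫ ω, ∑ k, C' i k * (ω k * f (C *ᵥ ω)) ∂stdGaussianPi J := by
        simp only [Matrix.mulVec, dotProduct, Finset.sum_mul, mul_assoc]
    _ = ∑ k, C' i k * ∑ j, C j k * ∫ ω, p (C *ᵥ ω) j ∂stdGaussianPi J := by
        rw [integral_finsetSum _ fun k _ => (integrable_term k).const_mul _]
        simp only [integral_const_mul, integral_apply_mul_comp_mulVec hf cp gf gp]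
    _ = ∑ j, (C' * Cᵀ) i j * ∫ ω, p (C *ᵥ ω) j ∂stdGaussianPi J := by
        simp only [Matrix.mul_apply, Matrix.transpose_apply, Finset.mul_sum, Finset.sum_mul,
          mul_assoc]
        exact Finset.sum_comm

lemma exists_norm_rotate_mulVec_le (a b : Matrix I J ℝ) :
    ∃ D, 0 ≤ D ∧ ∀ θ ω, ‖rotate a b θ *ᵥ ω‖ ≤ D * ‖ω‖ := by
  have op_bound (c : Matrix I J ℝ) : ∃ D, 0 ≤ D ∧ ∀ ω, ‖c *ᵥ ω‖ ≤ D * ‖ω‖ :=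
    ⟨_, norm_nonneg _, (LinearMap.toContinuousLinearMap c.mulVecLin).le_opNorm⟩
  obtain ⟨A, hA0, hA⟩ := op_bound a
  obtain ⟨B, hB0, hB⟩ := op_bound b
  refine ⟨B + A, by positivity, fun θ ω => ?_⟩
  rw [rotate_mulVec, add_mul]
  refine (norm_add_le _ _).trans (add_le_add ?_ ?_) <;> rw [norm_smul]
  · exact (mul_le_of_le_one_left (norm_nonneg _) (Real.abs_cos_le_one θ)).trans (hB ω)
  · exact (mul_le_of_le_one_left (norm_nonneg _) (Real.abs_sin_le_one θ)).trans (hA ω)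

lemma hasDerivAt_integral_rotate {Ψ : (I → ℝ) → ℝ} {P : (I → ℝ) → I → ℝ}
    (hΨ : ∀ y, HasGrad Ψ (P y) y) (cP : ∀ i, Continuous fun y => P y i) (gΨ : HasExpGrowth Ψ)
    (gP : ∀ i, HasExpGrowth fun y => P y i) (a b : Matrix I J ℝ) (θ : ℝ) :
    HasDerivAt (fun θ => ∫ ω, Ψ (rotate a b θ *ᵥ ω) ∂stdGaussianPi J)
      (∫ ω, P (rotate a b θ *ᵥ ω) ⬝ᵥ (rotate a b (θ + Real.pi / 2) *ᵥ ω) ∂stdGaussianPi J) θ := by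
  obtain ⟨D, hD, hb⟩ := exists_norm_rotate_mulVec_le a b
  choose q Q hq hQ hP using gP
  have cC θ : Continuous fun ω => rotate a b θ *ᵥ ω := (IsLipschitz.mulVec _).continuous
  have cΨ := HasGrad.continuous hΨ
  refine (hasDerivAt_integral_of_dominated_loc_of_deriv_le
    (F' := fun θ ω => P (rotate a b θ *ᵥ ω) ⬝ᵥ (rotate a b (θ + Real.pi / 2) *ᵥ ω))
    (bound := fun ω : J → ℝ => ∑ i, Q i * Real.exp (q i * (D * ‖ω‖)) * (D * ‖ω‖))
    Filter.univ_mem ?_ ?_ ?_ ?_ ?_ ?_).2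
  · exact .of_forall fun θ => (cΨ.comp (cC θ)).aestronglyMeasurable
  · exact (gΨ.comp (.mulVec _)).integrable (cΨ.comp (cC θ)).measurable
  · exact (continuous_finsetSum _ fun i _ => ((cP i).comp (cC θ)).mul
      ((continuous_apply i).comp (cC _))).aestronglyMeasurable
  · refine .of_forall fun ω θ _ => (Finset.abs_sum_le_sum_abs _ _).trans
      (Finset.sum_le_sum fun i _ => ?_)
    rw [abs_mul]
    have hQi := hQ i
    gcongr
    · refine (hP i _).trans ?_
      have hqi := hq i
      gcongr
      exact hb θ ω
    · exact (norm_le_pi_norm (rotate a b (θ + Real.pi / 2) *ᵥ ω) i).trans (hb _ ω)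
  · have norm_growth : HasExpGrowth fun ω : J → ℝ => D * ‖ω‖ :=
      .of_isLipschitz (IsLipschitz.const_mul D ⟨1, lipschitzWith_one_norm⟩)
    refine HasExpGrowth.integrable (.sum _ fun i _ => .mul ?_ norm_growth) (by fun_prop)
    exact ⟨q i * D, Q i, mul_nonneg (hq i) hD, hQ i, fun ω => by
      rw [abs_of_nonneg (mul_nonneg (hQ i) (Real.exp_pos _).le), mul_assoc]⟩
  · exact .of_forall fun ω θ _ =>
      (hΨ _).comp_hasDerivAt (hasDerivAt_rotate_mulVec a b ω θ)

lemma integral_rotate_deriv {Ψ : (I → ℝ) → ℝ} {P : (I → ℝ) → I → ℝ}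
    {H : (I → ℝ) → I → I → ℝ} (hΨ : HasHessian Ψ P H) (gP : ∀ i, HasExpGrowth fun y => P y i)
    (gH : ∀ i j, HasExpGrowth fun y => H y i j) (a b : Matrix I J ℝ) (hab : a * bᵀ = 0) (θ : ℝ) :
    ∫ ω, P (rotate a b θ *ᵥ ω) ⬝ᵥ (rotate a b (θ + Real.pi / 2) *ᵥ ω) ∂stdGaussianPi J =
      Real.sin θ * Real.cos θ *
        ∫ ω, ∑ i, ∑ j, (a * aᵀ - b * bᵀ) i j * H (rotate a b θ *ᵥ ω) i j ∂stdGaussianPi J := by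
  set C := rotate a b θ
  have cC : Continuous fun ω => C *ᵥ ω := (IsLipschitz.mulVec C).continuous
  have cP i : Continuous fun y => P y i := HasGrad.continuous (hΨ.hasGrad_grad i)
  have iH : ∀ i j, Integrable (fun ω => H (C *ᵥ ω) i j) (stdGaussianPi J) := fun i j =>
    ((gH i j).comp (.mulVec C)).integrable ((hΨ.continuous_hess i j).comp cC).measurable
  have iP : ∀ i, Integrable (fun ω => P (C *ᵥ ω) i * (rotate a b (θ + Real.pi / 2) *ᵥ ω) i)
      (stdGaussianPi J) := fun i =>
    (((gP i).comp (.mulVec C)).mul (.of_isLipschitz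
      (IsLipschitz.comp ⟨1, .eval i⟩ (.mulVec _)))).integrable
      (((cP i).comp cC).mul
        ((continuous_apply i).comp (IsLipschitz.mulVec _).continuous)).measurable
  have integral_hess (M : I → I → ℝ) : ∫ ω, ∑ i, ∑ j, M i j * H (C *ᵥ ω) i j ∂stdGaussianPi J =
      ∑ i, ∑ j, M i j * ∫ ω, H (C *ᵥ ω) i j ∂stdGaussianPi J := by
    rw [integral_finsetSum _ fun i _ => integrable_finsetSum _ fun j _ => (iH i j).const_mul _]
    refine Finset.sum_congr rfl fun i _ => ?_
    rw [integral_finsetSum _ fun j _ => (iH i j).const_mul _]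
    simp only [integral_const_mul]
  simp only [dotProduct]
  rw [integral_finsetSum _ fun i _ => iP i, integral_hess (a * aᵀ - b * bᵀ), Finset.mul_sum]
  refine Finset.sum_congr rfl fun i _ => ?_
  simp_rw [mul_comm (P _ i)]
  rw [integral_mulVec_apply_mul (hΨ.hasGrad_grad i) (hΨ.continuous_hess i) (gP i) (gH i),
    rotate_mul_transpose a b hab, Finset.mul_sum]
  simp only [Matrix.smul_apply, smul_eq_mul, mul_assoc]

lemma gaussian_comparison_of_orthogonal {Ψ : (I → ℝ) → ℝ} {P : (I → ℝ) → I → ℝ}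
    {H : (I → ℝ) → I → I → ℝ} (hΨ : HasHessian Ψ P H) (gΨ : HasExpGrowth Ψ)
    (gP : ∀ i, HasExpGrowth fun y => P y i) (gH : ∀ i j, HasExpGrowth fun y => H y i j)
    (a b : Matrix I J ℝ) (hab : a * bᵀ = 0)
    (hneg : ∀ y, ∑ i, ∑ j, (a * aᵀ - b * bᵀ) i j * H y i j ≤ 0) :
    ∫ ω, Ψ (a *ᵥ ω) ∂stdGaussianPi J ≤ ∫ ω, Ψ (b *ᵥ ω) ∂stdGaussianPi J := by
  have hderiv := hasDerivAt_integral_rotate hΨ.hasGrad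
    (fun i => HasGrad.continuous (hΨ.hasGrad_grad i)) gΨ gP a b
  have decreasing : AntitoneOn (fun θ => ∫ ω, Ψ (rotate a b θ *ᵥ ω) ∂stdGaussianPi J)
      (Set.Icc 0 (Real.pi / 2)) := by
    refine antitoneOn_of_deriv_nonpos (convex_Icc _ _)
      (fun θ _ => (hderiv θ).continuousAt.continuousWithinAt)
      (fun θ _ => (hderiv θ).differentiableAt.differentiableWithinAt) fun θ hθ => ?_
    rw [interior_Icc] at hθ
    rw [(hderiv θ).deriv, integral_rotate_deriv hΨ gP gH a b hab]
    refine mul_nonpos_of_nonneg_of_nonpos (mul_nonneg ?_ ?_) (integral_nonpos fun ω => hneg _)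
    · exact Real.sin_nonneg_of_nonneg_of_le_pi hθ.1.le (by linarith [hθ.2, Real.pi_pos])
    · exact Real.cos_nonneg_of_neg_pi_div_two_le_of_le (by linarith [hθ.1, Real.pi_pos]) hθ.2.le
  have endpoints := decreasing (Set.left_mem_Icc.2 (by positivity))
    (Set.right_mem_Icc.2 (by positivity)) (by positivity : (0 : ℝ) ≤ Real.pi / 2)
  simpa [rotate] using endpoints

lemma integral_mul_stdGaussianPi_sum {J' : Type*} [Fintype J'] (f : (J → ℝ) → ℝ)
    (g : (J' → ℝ) → ℝ) :
    ∫ ω, f (ω ∘ Sum.inl) * g (ω ∘ Sum.inr) ∂stdGaussianPi (J ⊕ J') =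
      (∫ ω, f ω ∂stdGaussianPi J) * ∫ ω, g ω ∂stdGaussianPi J' := by
  rw [← integral_prod_mul]
  exact (measurePreserving_sumPiEquivProdPi fun _ : J ⊕ J' => gaussianReal 0 1).integral_comp'
    (g := fun p : (J → ℝ) × (J' → ℝ) => f p.1 * g p.2)

lemma integral_comp_inl_stdGaussianPi {J' : Type*} [Fintype J'] (f : (J → ℝ) → ℝ) :
    ∫ ω, f (ω ∘ Sum.inl) ∂stdGaussianPi (J ⊕ J') = ∫ ω, f ω ∂stdGaussianPi J := by
  simpa using integral_mul_stdGaussianPi_sum f fun _ : J' → ℝ => 1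

lemma integral_comp_inr_stdGaussianPi {J' : Type*} [Fintype J'] (f : (J → ℝ) → ℝ) :
    ∫ ω, f (ω ∘ Sum.inr) ∂stdGaussianPi (J' ⊕ J) = ∫ ω, f ω ∂stdGaussianPi J := by
  simpa using integral_mul_stdGaussianPi_sum (fun _ : J' → ℝ => 1) f

theorem gaussian_comparison {J' : Type*} [Fintype J'] {Ψ : (I → ℝ) → ℝ} {P : (I → ℝ) → I → ℝ}
    {H : (I → ℝ) → I → I → ℝ} (hΨ : HasHessian Ψ P H) (gΨ : HasExpGrowth Ψ)
    (gP : ∀ i, HasExpGrowth fun y => P y i) (gH : ∀ i j, HasExpGrowth fun y => H y i j)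
    (a : Matrix I J ℝ) (b : Matrix I J' ℝ)
    (hneg : ∀ y, ∑ i, ∑ j, (a * aᵀ - b * bᵀ) i j * H y i j ≤ 0) :
    ∫ ω, Ψ (a *ᵥ ω) ∂stdGaussianPi J ≤ ∫ ω, Ψ (b *ᵥ ω) ∂stdGaussianPi J' := by
  have extended := gaussian_comparison_of_orthogonal hΨ gΨ gP gH
    (Matrix.fromCols a (0 : Matrix I J' ℝ)) (Matrix.fromCols (0 : Matrix I J ℝ) b)
    (by simp [Matrix.transpose_fromCols, Matrix.fromCols_mul_fromRows])
    (by simpa [Matrix.transpose_fromCols, Matrix.fromCols_mul_fromRows] using hneg)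
  simp only [Matrix.fromCols_mulVec, Matrix.zero_mulVec, add_zero, zero_add] at extended
  rwa [integral_comp_inl_stdGaussianPi fun ω => Ψ (a *ᵥ ω),
    integral_comp_inr_stdGaussianPi fun ω => Ψ (b *ᵥ ω)] at extended

end GaussianComparison

/-- `f` has gradient `p` and continuous Hessian `h`, both bounded. -/
structure HasBddHessian {I : Type*} [Fintype I] (f : (I → ℝ) → ℝ) (p : (I → ℝ) → I → ℝ)
    (h : (I → ℝ) → I → I → ℝ) : Prop extends HasHessian f p h where
  exists_abs_grad_le : ∃ C, ∀ y i, |p y i| ≤ C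
  exists_abs_hess_le : ∃ C, ∀ y i j, |h y i j| ≤ C

namespace HasBddHessian

variable {I K : Type*} [Fintype I] [Fintype K]

section

variable {f : (I → ℝ) → ℝ} {p : (I → ℝ) → I → ℝ} {h : (I → ℝ) → I → I → ℝ}

lemma isLipschitz (hf : HasBddHessian f p h) : IsLipschitz f :=
  let ⟨_, hC⟩ := hf.exists_abs_grad_le
  HasGrad.isLipschitz hf.hasGrad hC

lemma const_mul (c : ℝ) (hf : HasBddHessian f p h) :
    HasBddHessian (fun y => c * f y) (fun y i => c * p y i) (fun y i j => c * h y i j) where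
  hasGrad y := (hf.hasGrad y).const_mul c
  hasGrad_grad i y := (hf.hasGrad_grad i y).const_mul c
  continuous_hess i j := (hf.continuous_hess i j).const_mul c
  exists_abs_grad_le := by
    obtain ⟨C, hC⟩ := hf.exists_abs_grad_le
    exact ⟨|c| * C, fun y i => by rw [abs_mul]; gcongr; exact hC y i⟩
  exists_abs_hess_le := by
    obtain ⟨C, hC⟩ := hf.exists_abs_hess_le
    exact ⟨|c| * C, fun y i j => by rw [abs_mul]; gcongr; exact hC y i j⟩

lemma gaussian_comparison_exp {J J' : Type*} [Fintype J] [Fintype J'] (hf : HasBddHessian f p h)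
    (a : Matrix I J ℝ) (b : Matrix I J' ℝ)
    (hneg : ∀ y, ∑ i, ∑ j, (a * aᵀ - b * bᵀ) i j * (h y i j + p y i * p y j) ≤ 0) :
    ∫ ω, Real.exp (f (a *ᵥ ω)) ∂stdGaussianPi J ≤
      ∫ ω, Real.exp (f (b *ᵥ ω)) ∂stdGaussianPi J' := by
  obtain ⟨C, hC⟩ := hf.exists_abs_grad_le
  obtain ⟨D, hD⟩ := hf.exists_abs_hess_le
  have gexp : HasExpGrowth fun y => Real.exp (f y) := .comp .exp hf.isLipschitz
  have gp i : HasExpGrowth fun y => p y i := .of_bounded C fun y => hC y i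
  have gh i j : HasExpGrowth fun y => h y i j := .of_bounded D fun y => hD y i j
  have cp i : Continuous fun y => p y i := HasGrad.continuous (hf.hasGrad_grad i)
  have hess : HasHessian (fun y => Real.exp (f y)) (fun y i => Real.exp (f y) * p y i)
      (fun y i j => Real.exp (f y) * (h y i j + p y i * p y j)) :=
    { hasGrad := fun y => (hf.hasGrad y).exp
      hasGrad_grad := fun i y => ((hf.hasGrad y).exp.mul (hf.hasGrad_grad i y)).congr_grad
        fun j => by ring
      continuous_hess := fun i j => hf.isLipschitz.continuous.rexp.mul
        ((hf.continuous_hess i j).add ((cp i).mul (cp j))) }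
  refine gaussian_comparison hess gexp (fun i => gexp.mul (gp i))
    (fun i j => gexp.mul ((gh i j).add ((gp i).mul (gp j)))) a b fun y => ?_
  have factor : ∑ i, ∑ j, (a * aᵀ - b * bᵀ) i j * (Real.exp (f y) * (h y i j + p y i * p y j)) =
      Real.exp (f y) * ∑ i, ∑ j, (a * aᵀ - b * bᵀ) i j * (h y i j + p y i * p y j) := by
    simp only [Finset.mul_sum, mul_left_comm]
  rw [factor]
  exact mul_nonpos_of_nonneg_of_nonpos (Real.exp_pos _).le (hneg y)

end

lemma sum_apply : HasBddHessian (fun z : K → ℝ => ∑ k, z k) (fun _ _ => 1) (fun _ _ _ => 0) where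
  hasGrad z := by
    classical
    exact (HasGrad.sum fun k => HasGrad.apply k).congr_grad fun k => by simp [Pi.single_apply]
  hasGrad_grad _ z := (hasFDerivAt_const (1 : ℝ) z).congr_fderiv (by simp)
  continuous_hess _ _ := continuous_const
  exists_abs_grad_le := ⟨1, by simp⟩
  exists_abs_hess_le := ⟨0, by simp⟩

lemma comp_rows [DecidableEq K] {F : (K → ℝ) → ℝ} {P : (K → ℝ) → K → ℝ}
    {H : (K → ℝ) → K → K → ℝ} {g : (I → ℝ) → ℝ} {p : (I → ℝ) → I → ℝ} {h : (I → ℝ) → I → I → ℝ}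
    (hF : HasBddHessian F P H) (hg : HasBddHessian g p h) :
    HasBddHessian (fun y : K × I → ℝ => F fun k => g fun i => y (k, i))
      (fun y q => P (fun k => g fun i => y (k, i)) q.1 * p (fun i => y (q.1, i)) q.2)
      (fun y q s => H (fun k => g fun i => y (k, i)) q.1 s.1 * p (fun i => y (q.1, i)) q.2 *
          p (fun i => y (s.1, i)) s.2 +
        if q.1 = s.1 then
          P (fun k => g fun i => y (k, i)) q.1 * h (fun i => y (q.1, i)) q.2 s.2 else 0) := by
  obtain ⟨A, hA⟩ := hF.exists_abs_grad_le
  obtain ⟨B, hB⟩ := hF.exists_abs_hess_le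
  obtain ⟨C, hC⟩ := hg.exists_abs_grad_le
  obtain ⟨D, hD⟩ := hg.exists_abs_hess_le
  have row_continuous k : Continuous fun y : K × I → ℝ => fun i => y (k, i) := by fun_prop
  have rows_continuous : Continuous fun y : K × I → ℝ => fun k => g fun i => y (k, i) :=
    continuous_pi fun k => hg.isLipschitz.continuous.comp (row_continuous k)
  have p_continuous k i : Continuous fun y : K × I → ℝ => p (fun i => y (k, i)) i :=
    (HasGrad.continuous (hg.hasGrad_grad i)).comp (row_continuous k)
  have row_grad k (y : K × I → ℝ) := (hg.hasGrad fun i => y (k, i)).comp_row k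
  refine ⟨⟨fun y => ?_, fun q y => ?_, fun q s => ?_⟩, ⟨A * C, fun y q => ?_⟩,
    ⟨B * C * C + A * D, fun y q s => ?_⟩⟩
  · exact (HasGrad.comp (hF.hasGrad _) fun k => row_grad k y).congr_grad fun s => by simp
  · refine ((HasGrad.comp (hF.hasGrad_grad q.1 _) fun k => row_grad k y).mul
      ((hg.hasGrad_grad q.2 _).comp_row q.1)).congr_grad fun s => ?_
    simp only [mul_ite, mul_zero, Finset.sum_ite_eq', Finset.mem_univ, if_true]
    ring
  · refine (((hF.continuous_hess _ _).comp rows_continuous).mul (p_continuous _ _)).mul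
      (p_continuous _ _) |>.add ?_
    split_ifs
    · exact ((HasGrad.continuous (hF.hasGrad_grad q.1)).comp rows_continuous).mul
        ((hg.continuous_hess _ _).comp (row_continuous _))
    · exact continuous_const
  · rw [abs_mul]
    exact mul_le_mul (hA _ _) (hC _ _) (abs_nonneg _) ((abs_nonneg _).trans (hA 0 q.1))
  · have hA0 : 0 ≤ A := (abs_nonneg _).trans (hA 0 q.1)
    have hB0 : 0 ≤ B := (abs_nonneg _).trans (hB 0 q.1 q.1)
    have hC0 : 0 ≤ C := (abs_nonneg _).trans (hC 0 q.2)
    have hD0 : 0 ≤ D := (abs_nonneg _).trans (hD 0 q.2 q.2)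
    refine (abs_add_le _ _).trans (add_le_add ?_ ?_)
    · rw [abs_mul, abs_mul]
      gcongr
      exacts [hB _ _ _, hC _ _, hC _ _]
    · split_ifs
      · rw [abs_mul]
        gcongr
        exacts [hA _ _, hD _ _ _]
      · simpa using mul_nonneg hA0 hD0

end HasBddHessian

/-- The log-sum-exp function, a smooth approximation of the maximum as `β → ∞`. -/
def lse {I : Type*} [Fintype I] (β : ℝ) (y : I → ℝ) : ℝ :=
  β⁻¹ * Real.log (∑ i, Real.exp (β * y i))

/-- The softmax weights at inverse temperature `β`, which form the gradient of `lse β`. -/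
def softmax {I : Type*} [Fintype I] (β : ℝ) (y : I → ℝ) (i : I) : ℝ :=
  Real.exp (β * y i) / ∑ j, Real.exp (β * y j)

/-- The Jacobian of `softmax β`, that is, the Hessian of `lse β`. -/
def softmaxJacobian {I : Type*} [Fintype I] [DecidableEq I] (β : ℝ) (y : I → ℝ) (i j : I) : ℝ :=
  β * softmax β y i * ((if i = j then 1 else 0) - softmax β y j)

lemma softmax_nonneg {I : Type*} [Fintype I] (β : ℝ) (y : I → ℝ) (i : I) : 0 ≤ softmax β y i :=
  div_nonneg (Real.exp_pos _).le (Finset.sum_nonneg fun _ _ => (Real.exp_pos _).le)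

section LogSumExp

variable {I : Type*} [Fintype I] [Nonempty I]

lemma sum_exp_pos (β : ℝ) (y : I → ℝ) : 0 < ∑ i, Real.exp (β * y i) :=
  Finset.sum_pos (fun _ _ => Real.exp_pos _) Finset.univ_nonempty

lemma sum_softmax (β : ℝ) (y : I → ℝ) : ∑ i, softmax β y i = 1 := by
  simp only [softmax]
  rw [← Finset.sum_div, div_self (sum_exp_pos β y).ne']

lemma softmax_le_one (β : ℝ) (y : I → ℝ) (i : I) : softmax β y i ≤ 1 := by
  rw [← sum_softmax β y]
  exact Finset.single_le_sum (fun j _ => softmax_nonneg β y j) (Finset.mem_univ i)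

lemma sum_softmaxJacobian [DecidableEq I] (β : ℝ) (y : I → ℝ) (i : I) :
    ∑ j, softmaxJacobian β y i j = 0 := by
  simp only [softmaxJacobian]
  rw [← Finset.mul_sum, Finset.sum_sub_distrib, sum_softmax]
  simp

lemma exp_mul_lse {β : ℝ} (hβ : 0 < β) (y : I → ℝ) :
    Real.exp (β * lse β y) = ∑ i, Real.exp (β * y i) := by
  rw [lse, mul_inv_cancel_left₀ hβ.ne', Real.exp_log (sum_exp_pos β y)]

lemma softmax_eq_exp {β : ℝ} (hβ : 0 < β) (y : I → ℝ) (i : I) :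
    softmax β y i = Real.exp (β * y i + -β * lse β y) := by
  rw [softmax, ← exp_mul_lse hβ, ← Real.exp_sub, neg_mul, ← sub_eq_add_neg]

lemma hasGrad_lse {β : ℝ} (hβ : 0 < β) (y : I → ℝ) : HasGrad (lse β) (softmax β y) y := by
  classical
  refine (((HasGrad.sum fun i => ((HasGrad.apply i).const_mul β).exp).log
    (sum_exp_pos β y).ne').const_mul β⁻¹).congr_grad fun i => ?_
  simp only [softmax, Pi.single_apply, mul_ite, mul_one, mul_zero, Finset.sum_ite_eq,
    Finset.mem_univ, if_true]
  field_simp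

lemma hasGrad_softmax [DecidableEq I] {β : ℝ} (hβ : 0 < β) (i : I) (y : I → ℝ) :
    HasGrad (fun y => softmax β y i) (softmaxJacobian β y i) y := by
  simp only [softmax_eq_exp hβ]
  refine (((HasGrad.apply i).const_mul β).add
    ((hasGrad_lse hβ y).const_mul (-β))).exp.congr_grad fun j => ?_
  simp only [softmaxJacobian, softmax_eq_exp hβ, Pi.single_apply, eq_comm (a := i)]
  ring

lemma hasBddHessian_lse [DecidableEq I] {β : ℝ} (hβ : 0 < β) :
    HasBddHessian (lse β : (I → ℝ) → ℝ) (softmax β) (softmaxJacobian β) where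
  hasGrad := hasGrad_lse hβ
  hasGrad_grad := hasGrad_softmax hβ
  continuous_hess i j :=
    (continuous_const.mul (HasGrad.continuous (hasGrad_softmax hβ i))).mul
      (continuous_const.sub (HasGrad.continuous (hasGrad_softmax hβ j)))
  exists_abs_grad_le := ⟨1, fun y i => by
    rw [abs_of_nonneg (softmax_nonneg β y i)]
    exact softmax_le_one β y i⟩
  exists_abs_hess_le := by
    refine ⟨β * 1 * 1, fun y i j => ?_⟩
    rw [softmaxJacobian, abs_mul, abs_mul, abs_of_pos hβ, abs_of_nonneg (softmax_nonneg β y i)]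
    gcongr
    · exact softmax_le_one β y i
    · have h0 := softmax_nonneg β y j
      have h1 := softmax_le_one β y j
      split_ifs <;> exact abs_le.2 ⟨by linarith, by linarith⟩

lemma abs_lse_sub_iSup_le {β : ℝ} (hβ : 0 < β) (y : I → ℝ) :
    |lse β y - ⨆ i, y i| ≤ Real.log (Fintype.card I) / β := by
  have lower : ⨆ i, y i ≤ lse β y := ciSup_le fun i => by
    rw [← mul_le_mul_iff_right₀ hβ, ← Real.exp_le_exp, exp_mul_lse hβ]
    exact Finset.single_le_sum (f := fun i => Real.exp (β * y i)) (fun j _ => (Real.exp_pos _).le)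
      (Finset.mem_univ i)
  have upper : ∑ i, Real.exp (β * y i) ≤ Fintype.card I * Real.exp (β * ⨆ i, y i) := by
    rw [← nsmul_eq_mul]
    refine Finset.sum_le_card_nsmul _ _ _ fun i _ => Real.exp_le_exp.2 ?_
    exact mul_le_mul_of_nonneg_left (le_ciSup (Set.finite_range y).bddAbove i) hβ.le
  rw [abs_of_nonneg (sub_nonneg.2 lower), sub_le_iff_le_add, ← mul_le_mul_iff_right₀ hβ,
    ← Real.exp_le_exp, exp_mul_lse hβ, mul_add, Real.exp_add, mul_div_cancel₀ _ hβ.ne',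
    Real.exp_log (by exact_mod_cast Fintype.card_pos)]
  exact upper

lemma exists_forall_abs_lse_sub_iSup_le {δ : ℝ} (hδ : 0 < δ) (B : ℝ) :
    ∃ β, B ≤ β ∧ 0 < β ∧ ∀ y : I → ℝ, |lse β y - ⨆ i, y i| ≤ δ := by
  obtain ⟨β, hB, hβ, hsmall⟩ := ((Filter.eventually_ge_atTop B).and
    ((Filter.eventually_gt_atTop 0).and ((Filter.tendsto_id.const_div_atTop
      (Real.log (Fintype.card I))).eventually (ge_mem_nhds hδ)))).exists
  exact ⟨β, hB, hβ, fun y => (abs_lse_sub_iSup_le hβ y).trans hsmall⟩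

end LogSumExp

lemma integral_exp_le_of_le_add {Ω : Type*} [MeasurableSpace Ω] {μ : Measure Ω} {u v : Ω → ℝ}
    {δ : ℝ} (hv : Integrable (fun ω => Real.exp (v ω)) μ) (huv : ∀ ω, u ω ≤ δ + v ω) :
    ∫ ω, Real.exp (u ω) ∂μ ≤ Real.exp δ * ∫ ω, Real.exp (v ω) ∂μ := by
  rw [← integral_const_mul]
  refine integral_mono_of_nonneg (.of_forall fun ω => (Real.exp_pos _).le) (hv.const_mul _)
    (.of_forall fun ω => ?_)
  simpa only [← Real.exp_add, Real.exp_le_exp] using huv ω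

lemma integral_exp_le_of_forall_approx {Ω Ω' : Type*} [MeasurableSpace Ω] [MeasurableSpace Ω']
    {μ : Measure Ω} {ν : Measure Ω'} {F : Ω → ℝ} {G : Ω' → ℝ}
    (hG : Integrable (fun ω => Real.exp (G ω)) ν)
    (h : ∀ δ > 0, ∃ (f : Ω → ℝ) (g : Ω' → ℝ), Integrable (fun ω => Real.exp (f ω)) μ ∧
      (∀ ω, |f ω - F ω| ≤ δ) ∧
      (∀ ω, |g ω - G ω| ≤ δ) ∧ ∫ ω, Real.exp (f ω) ∂μ ≤ ∫ ω, Real.exp (g ω) ∂ν) :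
    ∫ ω, Real.exp (F ω) ∂μ ≤ ∫ ω, Real.exp (G ω) ∂ν := by
  have approx : ∀ δ > 0, ∫ ω, Real.exp (F ω) ∂μ ≤
      Real.exp δ * (Real.exp δ * ∫ ω, Real.exp (G ω) ∂ν) := fun δ hδ => by
    obtain ⟨f, g, hf, hfF, hgG, hfg⟩ := h δ hδ
    calc ∫ ω, Real.exp (F ω) ∂μ ≤ Real.exp δ * ∫ ω, Real.exp (f ω) ∂μ :=
          integral_exp_le_of_le_add hf fun ω => by linarith [(abs_le.1 (hfF ω)).1]
      _ ≤ Real.exp δ * ∫ ω, Real.exp (g ω) ∂ν := by gcongr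
      _ ≤ _ := by
          gcongr
          exact integral_exp_le_of_le_add hG fun ω => by linarith [(abs_le.1 (hgG ω)).2]
  have limit : Filter.Tendsto (fun δ => Real.exp δ * (Real.exp δ * ∫ ω, Real.exp (G ω) ∂ν))
      (nhdsWithin 0 (Set.Ioi 0)) (nhds (∫ ω, Real.exp (G ω) ∂ν)) :=
    (Continuous.tendsto' (by fun_prop) _ _ (by simp)).mono_left nhdsWithin_le_nhds
  exact ge_of_tendsto limit (Filter.eventually_of_mem self_mem_nhdsWithin approx)

section BlockComparison

variable {K U J J' : Type*} [Fintype J] [Fintype J']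

lemma block_comparison_lse [Fintype K] [Fintype U] [Nonempty U] {F : (K → ℝ) → ℝ}
    {P : (K → ℝ) → K → ℝ} {H : (K → ℝ) → K → K → ℝ} (hF : HasBddHessian F P H) {β : ℝ}
    (hβ : 0 < β) (c : ℝ) (a : Matrix (K × U) J ℝ) (b : Matrix (K × U) J' ℝ) {d : K → ℝ}
    (hdiag : ∀ k l l', (a * aᵀ - b * bᵀ) (k, l) (k, l') = d k)
    (hsign : ∀ z q s, (a * aᵀ - b * bᵀ) q s * (H z q.1 s.1 + P z q.1 * P z s.1) ≤ 0) :
    ∫ ω, Real.exp (F fun k => c * lse β fun l => (a *ᵥ ω) (k, l)) ∂stdGaussianPi J ≤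
      ∫ ω, Real.exp (F fun k => c * lse β fun l => (b *ᵥ ω) (k, l)) ∂stdGaussianPi J' := by
  classical
  refine (hF.comp_rows ((hasBddHessian_lse hβ).const_mul c)).gaussian_comparison_exp a b
    fun y => ?_
  set z : K → ℝ := fun k => c * lse β fun l => y (k, l)
  set σ : K × U → ℝ := fun q => softmax β (fun l => y (q.1, l)) q.2
  set M : K × U → K × U → ℝ := a * aᵀ - b * bᵀ
  have within_rows : ∑ q : K × U, ∑ s : K × U, M q s * (if q.1 = s.1 then
      P z q.1 * (c * softmaxJacobian β (fun l => y (q.1, l)) q.2 s.2) else 0) = 0 := by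
    refine Finset.sum_eq_zero fun ⟨k, l⟩ _ => ?_
    rw [Fintype.sum_prod_type, Finset.sum_eq_single k (fun k' _ hk => by simp [hk.symm])
      (by simp)]
    simp only [M, hdiag, if_true]
    rw [← Finset.mul_sum, ← Finset.mul_sum, ← Finset.mul_sum, sum_softmaxJacobian]
    simp
  calc _ = ∑ q, ∑ s, (M q s * (H z q.1 s.1 + P z q.1 * P z s.1) * (c ^ 2 * (σ q * σ s)) +
        M q s * (if q.1 = s.1 then
          P z q.1 * (c * softmaxJacobian β (fun l => y (q.1, l)) q.2 s.2) else 0)) := by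
        refine Finset.sum_congr rfl fun q _ => Finset.sum_congr rfl fun s _ => ?_
        simp only [M, σ, z]
        ring
    _ = ∑ q, ∑ s, M q s * (H z q.1 s.1 + P z q.1 * P z s.1) * (c ^ 2 * (σ q * σ s)) := by
        simp only [Finset.sum_add_distrib, within_rows, add_zero]
    _ ≤ 0 := Finset.sum_nonpos fun q _ => Finset.sum_nonpos fun s _ =>
        mul_nonpos_of_nonpos_of_nonneg (hsign z q s)
          (mul_nonneg (sq_nonneg c) (mul_nonneg (softmax_nonneg _ _ _) (softmax_nonneg _ _ _)))

lemma isLipschitz_mulVec_apply {I : Type*} (C : Matrix I J ℝ) (i : I) :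
    IsLipschitz fun ω => (C *ᵥ ω) i :=
  .of_linearMap (LinearMap.proj i ∘ₗ C.mulVecLin)

lemma isLipschitz_block_iSup [Fintype K] [Finite U] [Nonempty U] {F : (K → ℝ) → ℝ}
    (hF : IsLipschitz F) (c : ℝ) (C : Matrix (K × U) J ℝ) :
    IsLipschitz fun ω => F fun k => c * ⨆ l, (C *ᵥ ω) (k, l) :=
  hF.comp (.pi fun k => .const_mul c (.iSup fun l => isLipschitz_mulVec_apply C (k, l)))

theorem block_comparison_iSup [Fintype K] [Finite U] [Nonempty U] {F : (K → ℝ) → ℝ}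
    {P : (K → ℝ) → K → ℝ} {H : (K → ℝ) → K → K → ℝ} (hF : HasBddHessian F P H) (c : ℝ)
    (a : Matrix (K × U) J ℝ) (b : Matrix (K × U) J' ℝ) {d : K → ℝ}
    (hdiag : ∀ k l l', (a * aᵀ - b * bᵀ) (k, l) (k, l') = d k)
    (hsign : ∀ z q s, (a * aᵀ - b * bᵀ) q s * (H z q.1 s.1 + P z q.1 * P z s.1) ≤ 0) :
    ∫ ω, Real.exp (F fun k => c * ⨆ l, (a *ᵥ ω) (k, l)) ∂stdGaussianPi J ≤
      ∫ ω, Real.exp (F fun k => c * ⨆ l, (b *ᵥ ω) (k, l)) ∂stdGaussianPi J' := by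
  cases nonempty_fintype U
  classical
  refine integral_exp_le_of_forall_approx (isLipschitz_block_iSup hF.isLipschitz c b).integrable_exp
    fun δ hδ => ?_
  obtain ⟨L, hL⟩ := hF.isLipschitz
  obtain ⟨β, -, hβ, hclose⟩ := exists_forall_abs_lse_sub_iSup_le (I := U)
    (δ := δ / (L * |c| + 1)) (by positivity) 0
  have uniform (y : K × U → ℝ) : |F (fun k => c * lse β fun l => y (k, l)) -
      F fun k => c * ⨆ l, y (k, l)| ≤ δ := by
    calc _ ≤ L * dist (fun k => c * lse β fun l => y (k, l)) fun k => c * ⨆ l, y (k, l) :=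
          hL.dist_le_mul _ _
      _ ≤ L * (|c| * (δ / (L * |c| + 1))) := by
          gcongr
          refine (dist_pi_le_iff (by positivity)).2 fun k => ?_
          rw [Real.dist_eq, ← mul_sub, abs_mul]
          gcongr
          exact hclose _
      _ = L * |c| / (L * |c| + 1) * δ := by ring
      _ ≤ 1 * δ := by
          gcongr
          exact div_le_one_of_le₀ (by linarith) (by positivity)
      _ = δ := one_mul δ
  refine ⟨_, _, ?_, fun ω => uniform (a *ᵥ ω), fun ω => uniform (b *ᵥ ω),
    block_comparison_lse hF hβ c a b hdiag hsign⟩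
  exact (hF.isLipschitz.comp (.pi fun k => .const_mul c ((hasBddHessian_lse hβ).isLipschitz.comp
    (.pi fun l => isLipschitz_mulVec_apply a (k, l))))).integrable_exp

lemma lse_hessian_add_grad_mul_grad_nonpos [Fintype K] [DecidableEq K] {t β : ℝ} (ht : 0 ≤ t)
    (htβ : t ≤ β) (z : K → ℝ) {k k' : K} (hk : k ≠ k') :
    t * softmaxJacobian β z k k' + t * softmax β z k * (t * softmax β z k') ≤ 0 := by
  have factored : t * softmaxJacobian β z k k' + t * softmax β z k * (t * softmax β z k') =
      t * (t - β) * (softmax β z k * softmax β z k') := by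
    simp only [softmaxJacobian, hk, if_false]
    ring
  rw [factored]
  exact mul_nonpos_of_nonpos_of_nonneg (mul_nonpos_of_nonneg_of_nonpos ht (by linarith))
    (mul_nonneg (softmax_nonneg _ _ _) (softmax_nonneg _ _ _))

theorem gordon_comparison [Finite K] [Nonempty K] [Finite U] [Nonempty U] {t : ℝ} (ht : 0 ≤ t)
    (c : ℝ) (a : Matrix (K × U) J ℝ) (b : Matrix (K × U) J' ℝ)
    (hdiag : ∀ k l l', (a * aᵀ) (k, l) (k, l') = (b * bᵀ) (k, l) (k, l'))
    (hoff : ∀ q s, (b * bᵀ) q s ≤ (a * aᵀ) q s) :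
    ∫ ω, Real.exp (t * ⨆ k, c * ⨆ l, (a *ᵥ ω) (k, l)) ∂stdGaussianPi J ≤
      ∫ ω, Real.exp (t * ⨆ k, c * ⨆ l, (b *ᵥ ω) (k, l)) ∂stdGaussianPi J' := by
  cases nonempty_fintype K
  classical
  have sup_lipschitz : IsLipschitz fun z : K → ℝ => t * ⨆ k, z k :=
    .const_mul t (.iSup fun k => ⟨1, .eval k⟩)
  refine integral_exp_le_of_forall_approx (isLipschitz_block_iSup sup_lipschitz c b).integrable_exp
    fun δ hδ => ?_
  obtain ⟨β, htβ, hβ, hclose⟩ := exists_forall_abs_lse_sub_iSup_le (I := K)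
    (δ := δ / (t + 1)) (by positivity) t
  have uniform (z : K → ℝ) : |t * lse β z - t * ⨆ k, z k| ≤ δ := by
    rw [← mul_sub, abs_mul, abs_of_nonneg ht]
    calc t * |lse β z - ⨆ k, z k| ≤ (t + 1) * (δ / (t + 1)) :=
          mul_le_mul (by linarith) (hclose z) (abs_nonneg _) (by positivity)
      _ = δ := mul_div_cancel₀ _ (by positivity)
  have smooth := (hasBddHessian_lse (I := K) hβ).const_mul t
  refine ⟨_, _, (isLipschitz_block_iSup smooth.isLipschitz c a).integrable_exp,
    fun ω => uniform _, fun ω => uniform _,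
    block_comparison_iSup smooth c a b (d := 0) ?_ fun z q s => ?_⟩
  · intro k l l'
    rw [Matrix.sub_apply, hdiag, sub_self, Pi.zero_apply]
  · rw [Matrix.sub_apply]
    obtain hqs | hqs := eq_or_ne q.1 s.1
    · rw [show q = (s.1, q.2) from Prod.ext hqs rfl, hdiag s.1 q.2 s.2, sub_self, zero_mul]
    · exact mul_nonpos_of_nonneg_of_nonpos (sub_nonneg.2 (hoff q s))
        (lse_hessian_add_grad_mul_grad_nonpos ht htβ z hqs)

theorem replica_comparison [Fintype K] [Finite U] [Nonempty U] (c : ℝ)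
    (a : Matrix (K × U) J ℝ) (b : Matrix (K × U) J' ℝ) {d : K → ℝ}
    (hdiag : ∀ k l l', (a * aᵀ - b * bᵀ) (k, l) (k, l') = d k)
    (hle : ∀ q s, (a * aᵀ) q s ≤ (b * bᵀ) q s) :
    ∫ ω, Real.exp (∑ k, c * ⨆ l, (a *ᵥ ω) (k, l)) ∂stdGaussianPi J ≤
      ∫ ω, Real.exp (∑ k, c * ⨆ l, (b *ᵥ ω) (k, l)) ∂stdGaussianPi J' :=
  block_comparison_iSup .sum_apply c a b hdiag fun _ q s => by
    simpa only [zero_add, mul_one, Matrix.sub_apply, sub_nonpos] using hle q s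

end BlockComparison

lemma integral_prod_stdGaussianPi_prod {K M : Type*} [Fintype K] [Fintype M]
    (f : (M → ℝ) → ℝ) :
    ∫ ω : K × M → ℝ, ∏ k, f (fun i => ω (k, i)) ∂stdGaussianPi (K × M) =
      (∫ g, f g ∂stdGaussianPi M) ^ Fintype.card K := by
  have h := Measure.infinitePi_map_curry (ι := K) (κ := M) (X := ℝ) fun _ _ => gaussianReal 0 1
  simp only [Measure.infinitePi_eq_pi] at h
  rw [← integral_fintype_prod_eq_pow (ι := K) f, ← h, integral_map_equiv]
  rfl

lemma integral_exp_mul_stdGaussianPi_unit (t : ℝ) :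
    ∫ ω : Unit → ℝ, Real.exp (t * ω ()) ∂stdGaussianPi Unit = Real.exp (t ^ 2 / 2) := by
  have h := integral_fintype_prod_eq_prod (𝕜 := ℝ) (μ := fun _ : Unit => gaussianReal 0 1)
    fun _ y => Real.exp (t * y)
  simp only [Finset.univ_unique, Finset.prod_singleton] at h
  refine h.trans ((congrFun (mgf_fun_id_gaussianReal (μ := 0) (v := 1)) t).trans ?_)
  simp

lemma integral_exp_add_stdGaussianPi_unit {J : Type*} [Fintype J] (f : (J → ℝ) → ℝ) (t : ℝ) :
    ∫ ω, Real.exp (f (ω ∘ Sum.inl) + t * ω (Sum.inr ())) ∂stdGaussianPi (J ⊕ Unit) =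
      Real.exp (t ^ 2 / 2) * ∫ ω, Real.exp (f ω) ∂stdGaussianPi J := by
  rw [← integral_exp_mul_stdGaussianPi_unit, mul_comm, ← integral_mul_stdGaussianPi_sum]
  simp only [Real.exp_add, Function.comp_apply]

section Gordon

variable {I J K U M N : Type*} [Fintype J] [Fintype M] [Fintype N]

lemma mul_transpose_apply_le_one {u : Matrix U M ℝ} (hu : ∀ l, (u * uᵀ) l l ≤ 1) (l l' : U) :
    (u * uᵀ) l l' ≤ 1 := by
  have h : (u * uᵀ) l l' ≤ ((u * uᵀ) l l + (u * uᵀ) l' l') / 2 := by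
    simp only [Matrix.mul_apply, Matrix.transpose_apply, ← Finset.sum_add_distrib, Finset.sum_div]
    exact Finset.sum_le_sum fun i _ => by linarith [two_mul_le_add_sq (u l i) (u l' i)]
  linarith [hu l, hu l']

/-- If `a` represents a Gaussian process `a *ᵥ ω`, then `addCommonGaussian a` represents the process
with one further independent standard Gaussian variable added to all its coordinates. -/
def addCommonGaussian (a : Matrix I J ℝ) : Matrix I (J ⊕ Unit) ℝ :=
  Matrix.fromCols a (.of fun _ _ => 1)

lemma addCommonGaussian_mulVec (a : Matrix I J ℝ) (ω : J ⊕ Unit → ℝ) (i : I) :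
    (addCommonGaussian a *ᵥ ω) i = (a *ᵥ (ω ∘ Sum.inl)) i + ω (Sum.inr ()) := by
  simp only [addCommonGaussian, Matrix.fromCols_mulVec, Pi.add_apply]
  simp [Matrix.mulVec, dotProduct]

lemma addCommonGaussian_mul_transpose_apply (a : Matrix I J ℝ) (i j : I) :
    (addCommonGaussian a * (addCommonGaussian a)ᵀ) i j = (a * aᵀ) i j + 1 := by
  simp [addCommonGaussian, Matrix.mul_apply]

/-- The matrix whose rows represent the linear forms `A ↦ ⟪u l, A x k⟫` on `M × N` matrices. -/
def bilinearRows (u : Matrix U M ℝ) (x : Matrix K N ℝ) : Matrix (K × U) (M × N) ℝ :=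
  .of fun q p => u q.2 p.1 * x q.1 p.2

lemma bilinearRows_mulVec_apply (u : Matrix U M ℝ) (x : Matrix K N ℝ) (A : M × N → ℝ) (k : K)
    (l : U) : (bilinearRows u x *ᵥ A) (k, l) = (u *ᵥ (Matrix.of A.curry *ᵥ x k)) l := by
  simp only [bilinearRows, Matrix.mulVec, dotProduct, Matrix.of_apply, Fintype.sum_prod_type,
    Function.curry_apply, Finset.mul_sum]
  exact Finset.sum_congr rfl fun i _ => Finset.sum_congr rfl fun j _ => by ring

lemma bilinearRows_mul_transpose_apply (u : Matrix U M ℝ) (x : Matrix K N ℝ) (q s : K × U) :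
    (bilinearRows u x * (bilinearRows u x)ᵀ) q s = (u * uᵀ) q.2 s.2 * (x * xᵀ) q.1 s.1 := by
  simp only [bilinearRows, Matrix.mul_apply, Matrix.transpose_apply, Matrix.of_apply,
    Fintype.sum_prod_type, Finset.sum_mul_sum]
  exact Finset.sum_congr rfl fun i _ => Finset.sum_congr rfl fun j _ => by ring

/-- The matrix whose row `(k, l)` is the concatenation of the rows `u l` and `x k`. -/
def sumRows (u : Matrix U M ℝ) (x : Matrix K N ℝ) : Matrix (K × U) (M ⊕ N) ℝ :=
  Matrix.fromCols (u.submatrix Prod.snd id) (x.submatrix Prod.fst id)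

lemma sumRows_mulVec_apply (u : Matrix U M ℝ) (x : Matrix K N ℝ) (ω : M ⊕ N → ℝ) (k : K) (l : U) :
    (sumRows u x *ᵥ ω) (k, l) = (u *ᵥ (ω ∘ Sum.inl)) l + (x *ᵥ (ω ∘ Sum.inr)) k := by
  rw [sumRows, Matrix.fromCols_mulVec]
  rfl

lemma sumRows_mul_transpose_apply (u : Matrix U M ℝ) (x : Matrix K N ℝ) (q s : K × U) :
    (sumRows u x * (sumRows u x)ᵀ) q s = (u * uᵀ) q.2 s.2 + (x * xᵀ) q.1 s.1 := by
  rw [sumRows, Matrix.transpose_fromCols, Matrix.fromCols_mul_fromRows]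
  rfl

variable [Finite K] [Nonempty K] [Finite U] [Nonempty U]

lemma iSup_mul_iSup_add_const (r c : ℝ) (y : K → U → ℝ) :
    ⨆ k, r * ⨆ l, (y k l + c) = (⨆ k, r * ⨆ l, y k l) + r * c := by
  simp only [← ciSup_add (Set.finite_range _).bddAbove, mul_add]

lemma iSup_mul_iSup_add (r : ℝ) (y : U → ℝ) (z : K → ℝ) :
    ⨆ k, r * ⨆ l, (y l + z k) = r * (⨆ l, y l) + ⨆ k, r * z k := by
  simp only [← ciSup_add (Set.finite_range _).bddAbove, mul_add,
    ← add_ciSup (Set.finite_range _).bddAbove]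

lemma gordon_mgf_le {r t : ℝ} (hr : |r| = 1) (ht : 0 ≤ t) {u : Matrix U M ℝ}
    {x : Matrix K N ℝ} (hu : ∀ l, (u * uᵀ) l l ≤ 1) (hx : ∀ k, (x * xᵀ) k k = 1) :
    Real.exp (t ^ 2 / 2) * ∫ A : M × N → ℝ,
        Real.exp (t * ⨆ k, r * ⨆ l, (u *ᵥ (Matrix.of A.curry *ᵥ x k)) l) ∂stdGaussianPi (M × N) ≤
      (∫ g, Real.exp (t * (r * ⨆ l, (u *ᵥ g) l)) ∂stdGaussianPi M) *
        ∫ G, Real.exp (t * ⨆ k, r * (x *ᵥ G) k) ∂stdGaussianPi N := by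
  have comparison := gordon_comparison ht r (addCommonGaussian (bilinearRows u x)) (sumRows u x)
    (fun k l l' => by
      simp [addCommonGaussian_mul_transpose_apply, bilinearRows_mul_transpose_apply,
        sumRows_mul_transpose_apply, hx])
    (fun q s => by
      rw [addCommonGaussian_mul_transpose_apply, bilinearRows_mul_transpose_apply,
        sumRows_mul_transpose_apply]
      nlinarith [mul_transpose_apply_le_one hu q.2 s.2,
        mul_transpose_apply_le_one (fun k => (hx k).le) q.1 s.1])
  have hrt : (t * r) ^ 2 = t ^ 2 := by rw [mul_pow, ← sq_abs r, hr, one_pow, mul_one]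
  simp only [addCommonGaussian_mulVec, bilinearRows_mulVec_apply, sumRows_mulVec_apply,
    iSup_mul_iSup_add_const, iSup_mul_iSup_add, mul_add, ← mul_assoc t r (_ : ℝ)] at comparison
  rw [integral_exp_add_stdGaussianPi_unit (J := M × N) fun A =>
    t * ⨆ k, r * ⨆ l, (u *ᵥ (Matrix.of A.curry *ᵥ x k)) l, hrt] at comparison
  simpa only [← integral_mul_stdGaussianPi_sum, ← Real.exp_add, ← mul_assoc] using comparison

lemma mgf_iSup_mulVec_le_pow (c : ℝ) (n : ℕ) {u : Matrix U M ℝ} (hu : ∀ l, (u * uᵀ) l l ≤ 1) :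
    ∫ g, Real.exp (n * c * ⨆ l, (u *ᵥ g) l) ∂stdGaussianPi M ≤
      Real.exp ((n * c) ^ 2 / 2) *
        (∫ g, Real.exp (c * ⨆ l, (u *ᵥ g) l) ∂stdGaussianPi M) ^ n := by
  let a : Matrix (Fin n × U) M ℝ := u.submatrix Prod.snd id
  let b : Matrix (Fin n × U) (Fin n × M) ℝ := .of fun q p => if q.1 = p.1 then u q.2 p.2 else 0
  have gram_a (q s : Fin n × U) : (a * aᵀ) q s = (u * uᵀ) q.2 s.2 := rfl
  have gram_b (q s : Fin n × U) : (b * bᵀ) q s = if q.1 = s.1 then (u * uᵀ) q.2 s.2 else 0 := by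
    simp [b, Matrix.mul_apply, Fintype.sum_prod_type]
  have mulVec_a (g : M → ℝ) (k : Fin n) (l : U) : (a *ᵥ g) (k, l) = (u *ᵥ g) l := rfl
  have mulVec_b (ω : Fin n × M → ℝ) (k : Fin n) (l : U) :
      (b *ᵥ ω) (k, l) = (u *ᵥ fun i => ω (k, i)) l := by
    simp [b, Matrix.mulVec, dotProduct, Fintype.sum_prod_type]
  have comparison := replica_comparison c a (addCommonGaussian b) (d := fun _ => -1)
    (fun k l l' => by
      simp [addCommonGaussian_mul_transpose_apply, gram_a, gram_b])
    (fun q s => by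
      rw [addCommonGaussian_mul_transpose_apply, gram_a, gram_b]
      split_ifs
      · linarith
      · linarith [mul_transpose_apply_le_one hu q.2 s.2])
  have sum_const_add (ω : Fin n × M → ℝ) (z : ℝ) :
      ∑ k, c * ⨆ l, ((u *ᵥ fun i => ω (k, i)) l + z) =
        ∑ k, c * (⨆ l, (u *ᵥ fun i => ω (k, i)) l) + n * c * z := by
    simp only [← ciSup_add (Set.finite_range _).bddAbove, mul_add, Finset.sum_add_distrib,
      Finset.sum_const, Finset.card_univ, Fintype.card_fin, nsmul_eq_mul, mul_assoc]
  simp only [mulVec_a, addCommonGaussian_mulVec, mulVec_b] at comparison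
  simp only [sum_const_add (_ ∘ Sum.inl), Finset.sum_const, Finset.card_univ, Fintype.card_fin,
    nsmul_eq_mul, ← mul_assoc] at comparison
  rw [integral_exp_add_stdGaussianPi_unit (J := Fin n × M) fun ω =>
    ∑ k, c * ⨆ l, (u *ᵥ fun i => ω (k, i)) l] at comparison
  simp only [Real.exp_sum] at comparison
  rwa [integral_prod_stdGaussianPi_prod fun g => Real.exp (c * ⨆ l, (u *ᵥ g) l),
    Fintype.card_fin] at comparison

end Gordon

lemma zero_mem_interior_integrableExpSet {Ω : Type*} [MeasurableSpace Ω] {μ : Measure Ω} {X : Ω → ℝ}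
    (h : ∀ t, Integrable (fun ω => Real.exp (t * X ω)) μ) :
    0 ∈ interior (integrableExpSet X μ) := by
  rw [show integrableExpSet X μ = Set.univ from Set.eq_univ_of_forall h, interior_univ]
  trivial

lemma tendsto_mul_cgf_div {Ω : Type*} [MeasurableSpace Ω] {μ : Measure Ω} [IsProbabilityMeasure μ]
    {X : Ω → ℝ} (h : 0 ∈ interior (integrableExpSet X μ)) (t : ℝ) :
    Filter.Tendsto (fun n : ℕ => n * cgf X μ (t / n)) Filter.atTop (nhds (t * μ[X])) := by
  have hderiv : HasDerivAt (fun s => cgf X μ (s * t)) (t * μ[X]) 0 := by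
    have hcgf := (analyticAt_cgf h).differentiableAt.hasDerivAt
    rw [deriv_cgf_zero h, probReal_univ, div_one, ← zero_mul t] at hcgf
    simpa only [mul_comm, Function.comp_def] using
      HasDerivAt.comp (0 : ℝ) hcgf (hasDerivAt_mul_const t)
  refine (hderiv.tendsto_slope_zero_right.comp (tendsto_inv_atTop_nhdsGT_zero.comp
    tendsto_natCast_atTop_atTop)).congr fun n => ?_
  simp [div_eq_inv_mul]

lemma integral_le_of_mgf_le {Ω : Type*} [MeasurableSpace Ω] {μ : Measure Ω}
    [IsProbabilityMeasure μ] {X : Ω → ℝ} {c : ℝ}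
    (hint : ∀ t, Integrable (fun ω => Real.exp (t * X ω)) μ)
    (h : ∀ t, 0 < t → mgf X μ t ≤ Real.exp (t ^ 2 / 2 + t * c)) :
    μ[X] ≤ c := by
  have limit := tendsto_mul_cgf_div (zero_mem_interior_integrableExpSet hint) 1
  have bound : Filter.Tendsto (fun n : ℕ => (n : ℝ)⁻¹ * (1 / 2) + c) Filter.atTop (nhds c) := by
    simpa only [zero_mul, zero_add] using
      ((tendsto_inv_atTop_nhds_zero_nat (𝕜 := ℝ)).mul_const (1 / 2)).add_const c
  rw [one_mul] at limit
  refine le_of_tendsto_of_tendsto limit bound ?_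
  filter_upwards [Filter.eventually_gt_atTop 0] with n hn
  have : (0 : ℝ) < n := by exact_mod_cast hn
  calc n * cgf X μ (1 / n) ≤ n * ((1 / n) ^ 2 / 2 + 1 / n * c) := by
        gcongr
        exact (Real.log_le_iff_le_exp (mgf_pos (hint _))).2 (h _ (by positivity))
    _ = (n : ℝ)⁻¹ * (1 / 2) + c := by field_simp

section GordonMgf

variable {K U M N : Type*} [Fintype M] [Fintype N] [Finite U] [Nonempty U]

lemma isLipschitz_iSup_mulVec (u : Matrix U M ℝ) : IsLipschitz fun g : M → ℝ => ⨆ l, (u *ᵥ g) l :=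
  .iSup (isLipschitz_mulVec_apply u)

lemma integrable_exp_mul_iSup_mulVec (u : Matrix U M ℝ) (t : ℝ) :
    Integrable (fun g => Real.exp (t * ⨆ l, (u *ᵥ g) l)) (stdGaussianPi M) :=
  ((isLipschitz_iSup_mulVec u).const_mul t).integrable_exp

theorem mgf_iSup_mulVec_le (t : ℝ) {u : Matrix U M ℝ} (hu : ∀ l, (u * uᵀ) l l ≤ 1) :
    ∫ g, Real.exp (t * ⨆ l, (u *ᵥ g) l) ∂stdGaussianPi M ≤
      Real.exp (t ^ 2 / 2 + t * ∫ g, ⨆ l, (u *ᵥ g) l ∂stdGaussianPi M) := by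
  set F : (M → ℝ) → ℝ := fun g => ⨆ l, (u *ᵥ g) l
  have hint (s : ℝ) : Integrable (fun g => Real.exp (s * F g)) (stdGaussianPi M) :=
    integrable_exp_mul_iSup_mulVec u s
  have hbound (n : ℕ) (hn : n ≠ 0) :
      cgf F (stdGaussianPi M) t ≤ t ^ 2 / 2 + n * cgf F (stdGaussianPi M) (t / n) := by
    have h := mgf_iSup_mulVec_le_pow (t / n) n hu
    rw [mul_div_cancel₀ t (by exact_mod_cast hn)] at h
    rw [cgf, cgf, ← Real.log_pow, ← Real.log_exp (t ^ 2 / 2), ← Real.log_mul (by positivity)]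
    · exact Real.log_le_log (mgf_pos (hint t)) h
    · exact (pow_pos (mgf_pos (hint _)) n).ne'
  have limit := tendsto_mul_cgf_div (zero_mem_interior_integrableExpSet hint) t
  exact (Real.log_le_iff_le_exp (mgf_pos (hint t))).1 (ge_of_tendsto (limit.const_add _)
    ((Filter.eventually_ne_atTop 0).mono hbound))

theorem gordon_mgf_bilinear_le [Finite K] [Nonempty K] {r t : ℝ} (hr : |r| = 1) (ht : 0 ≤ t)
    {u : Matrix U M ℝ} {x : Matrix K N ℝ} (hu : ∀ l, (u * uᵀ) l l ≤ 1)
    (hx : ∀ k, (x * xᵀ) k k = 1) :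
    ∫ A : M × N → ℝ, Real.exp (t * ⨆ k, r * ⨆ l, (u *ᵥ (Matrix.of A.curry *ᵥ x k)) l)
        ∂stdGaussianPi (M × N) ≤
      Real.exp (t ^ 2 / 2 + t * (r * (∫ g, ⨆ l, (u *ᵥ g) l ∂stdGaussianPi M) +
        ∫ G, ⨆ k, r * (x *ᵥ G) k ∂stdGaussianPi N)) := by
  have hrr : r * r = 1 := by rw [← abs_mul_abs_self, hr, one_mul]
  have hsmul (k : K) : ((r • x) * (r • x)ᵀ) k k ≤ 1 := by
    simp only [Matrix.transpose_smul, Matrix.smul_mul, Matrix.mul_smul, Matrix.smul_apply, hx,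
      smul_eq_mul, mul_one, hrr, le_refl]
  have mgf_u := mgf_iSup_mulVec_le (t * r) hu
  have mgf_x := mgf_iSup_mulVec_le t hsmul
  simp only [Matrix.smul_mulVec, Pi.smul_apply, smul_eq_mul] at mgf_x
  simp only [mul_pow, pow_two r, hrr, mul_one, mul_assoc t r] at mgf_u
  rw [← mul_le_mul_iff_right₀ (Real.exp_pos (t ^ 2 / 2))]
  calc _ ≤ _ := gordon_mgf_le hr ht hu hx
    _ ≤ _ := mul_le_mul mgf_u mgf_x (integral_nonneg fun _ => (Real.exp_pos _).le)
        (Real.exp_pos _).le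
    _ = _ := by
        rw [← Real.exp_add, ← Real.exp_add]
        ring_nf

end GordonMgf

lemma tendsto_integral_comp {J : Type*} [Fintype J] {F : ℕ → (J → ℝ) → ℝ} {G L : (J → ℝ) → ℝ}
    {φ : ℝ → ℝ} (hφ : HasExpGrowth φ) (cφ : Continuous φ) (hF : ∀ n, IsLipschitz (F n))
    (hG : IsLipschitz G) (hbound : ∀ n ω, |F n ω| ≤ G ω)
    (hlim : ∀ ω, Filter.Tendsto (fun n => F n ω) Filter.atTop (nhds (L ω))) :
    Filter.Tendsto (fun n => ∫ ω, φ (F n ω) ∂stdGaussianPi J) Filter.atTop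
      (nhds (∫ ω, φ (L ω) ∂stdGaussianPi J)) := by
  obtain ⟨c, C, hc, hC, hφ⟩ := hφ
  refine tendsto_integral_of_dominated_convergence (fun ω => C * Real.exp (c * G ω))
    (fun n => (cφ.comp (hF n).continuous).aestronglyMeasurable)
    ((hG.const_mul c).integrable_exp.const_mul C) (fun n => .of_forall fun ω => ?_)
    (.of_forall fun ω => (cφ.tendsto _).comp (hlim ω))
  refine (hφ _).trans ?_
  have := hbound n ω
  rw [Real.norm_eq_abs]
  gcongr

lemma one_add_sq_div_two_le_cosh (x : ℝ) : 1 + x ^ 2 / 2 ≤ Real.cosh x := by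
  have half : (x / 2) ^ 2 ≤ Real.sinh (x / 2) ^ 2 :=
    sq_le_sq.2 (Real.abs_sinh _ ▸ Real.self_le_sinh_iff.2 (abs_nonneg _))
  have double := Real.cosh_two_mul (x / 2)
  rw [mul_div_cancel₀ x two_ne_zero, Real.cosh_sq] at double
  linarith

lemma sq_div_two_mul_variance_le {Ω : Type*} [MeasurableSpace Ω] {μ : Measure Ω}
    [IsProbabilityMeasure μ] {X : Ω → ℝ} (hX : MemLp X 2 μ)
    (hint : ∀ t, Integrable (fun ω => Real.exp (t * (X ω - μ[X]))) μ) (t : ℝ) :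
    t ^ 2 / 2 * Var[X; μ] ≤
      (mgf (fun ω => X ω - μ[X]) μ t + mgf (fun ω => X ω - μ[X]) μ (-t)) / 2 - 1 := by
  have hcosh (ω : Ω) : t ^ 2 / 2 * (X ω - μ[X]) ^ 2 ≤
      (Real.exp (t * (X ω - μ[X])) + Real.exp (-t * (X ω - μ[X]))) / 2 - 1 := by
    have := one_add_sq_div_two_le_cosh (t * (X ω - μ[X]))
    rw [Real.cosh_eq, ← neg_mul] at this
    linarith
  have sum_int := ((hint t).add (hint (-t))).div_const 2
  have hsq : Integrable (fun ω => (X ω - μ[X]) ^ 2) μ := (hX.sub (memLp_const _)).integrable_sq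
  rw [variance_eq_integral hX.aemeasurable, ← integral_const_mul]
  refine (integral_mono (hsq.const_mul _) (sum_int.sub (integrable_const 1)) hcosh).trans_eq ?_
  rw [integral_sub' sum_int (integrable_const 1), integral_div,
    integral_add' (hint t) (hint (-t)), integral_const, probReal_univ, one_smul]
  rfl

lemma variance_le_one_of_mgf_le {Ω : Type*} [MeasurableSpace Ω] {μ : Measure Ω}
    [IsProbabilityMeasure μ] {X : Ω → ℝ}
    (hint : ∀ t, Integrable (fun ω => Real.exp (t * X ω)) μ)
    (h : ∀ t, mgf X μ t ≤ Real.exp (t ^ 2 / 2 + t * μ[X])) : Var[X; μ] ≤ 1 := by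
  have hX : MemLp X 2 μ := by
    simpa using memLp_of_mem_interior_integrableExpSet (zero_mem_interior_integrableExpSet hint) 2
  have centered_int (t : ℝ) : Integrable (fun ω => Real.exp (t * (X ω - μ[X]))) μ := by
    simpa only [mul_sub, Real.exp_sub] using (hint t).div_const _
  have centered_mgf (t : ℝ) : mgf (fun ω => X ω - μ[X]) μ t ≤ Real.exp (t ^ 2 / 2) := by
    simp only [mgf, mul_sub, Real.exp_sub, integral_div]
    rw [div_le_iff₀ (Real.exp_pos _), ← Real.exp_add]
    exact h t
  have quadratic (t : ℝ) : t ^ 2 / 2 * Var[X; μ] ≤ Real.exp (t ^ 2 / 2) - 1 := by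
    have := centered_mgf (-t)
    rw [neg_sq] at this
    linarith [centered_mgf t, sq_div_two_mul_variance_le hX centered_int t]
  have slope := (Real.hasDerivAt_exp 0).tendsto_slope_zero_right
  simp only [zero_add, Real.exp_zero, smul_eq_mul] at slope
  refine ge_of_tendsto slope (eventually_mem_nhdsWithin.mono fun s (hs : 0 < s) => ?_)
  have hq := quadratic (Real.sqrt (2 * s))
  rw [Real.sq_sqrt (by positivity), mul_div_cancel_left₀ s two_ne_zero] at hq
  rwa [inv_mul_eq_div, le_div_iff₀' hs]

section Euclidean

open WithLp (toLp)

variable {M : Type*} [Fintype M]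

lemma norm_toLp_sq (v : M → ℝ) : ‖toLp 2 v‖ ^ 2 = v ⬝ᵥ v := by
  rw [EuclideanSpace.real_norm_sq_eq]
  simp only [dotProduct, sq]

lemma abs_dotProduct_le_norm_toLp_mul (v w : M → ℝ) :
    |v ⬝ᵥ w| ≤ ‖toLp 2 v‖ * ‖toLp 2 w‖ := by
  have := abs_real_inner_le_norm (toLp 2 w) (toLp 2 v)
  rwa [EuclideanSpace.inner_toLp_toLp, star_trivial, mul_comm] at this

lemma isLipschitz_norm_toLp : IsLipschitz fun v : M → ℝ => ‖toLp 2 v‖ :=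
  .norm ⟨_, PiLp.lipschitzWith_toLp 2 _⟩

variable (M) in
lemma exists_seq_tendsto_iSup_dotProduct : ∃ u : ℕ → M → ℝ, (∀ l, u l ⬝ᵥ u l ≤ 1) ∧
    ∀ v, Filter.Tendsto (fun n => ⨆ l : Fin (n + 1), u l ⬝ᵥ v) Filter.atTop (nhds ‖toLp 2 v‖) := by
  let B := Metric.closedBall (0 : EuclideanSpace ℝ M) 1
  have : Nonempty B := ⟨0, by simp [B]⟩
  let u := TopologicalSpace.denseSeq B
  have norm_le (l : ℕ) : ‖toLp 2 (u l).1.ofLp‖ ≤ 1 := mem_closedBall_zero_iff.1 (u l).2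
  refine ⟨fun l => (u l).1.ofLp, fun l => ?_, fun v => tendsto_order.2 ⟨fun a ha => ?_,
    fun a ha => .of_forall fun n => (ciSup_le fun l => ?_).trans_lt ha⟩⟩
  · rw [← norm_toLp_sq]
    exact pow_le_one₀ (norm_nonneg _) (norm_le l)
  · have hopen : IsOpen {w : B | a < w.1.ofLp ⬝ᵥ v} := isOpen_lt continuous_const (by fun_prop)
    let w : B := ⟨‖toLp 2 v‖⁻¹ • toLp 2 v, by
      simpa [B, norm_smul] using inv_mul_le_one (a := ‖toLp 2 v‖)⟩
    have hw : w.1.ofLp ⬝ᵥ v = ‖toLp 2 v‖ := by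
      simp only [w, WithLp.ofLp_smul, smul_dotProduct, ← norm_toLp_sq, sq, smul_eq_mul,
        ← mul_assoc, inv_mul_mul_self]
    obtain ⟨l, hl⟩ := (TopologicalSpace.denseRange_denseSeq B).exists_mem_open hopen
      ⟨w, ha.trans_eq hw.symm⟩
    filter_upwards [Filter.eventually_ge_atTop l] with n hn
    exact hl.trans_le (le_ciSup (f := fun l : Fin (n + 1) => (u l).1.ofLp ⬝ᵥ v)
      (Set.finite_range _).bddAbove ⟨l, by omega⟩)
  · refine ((le_abs_self _).trans (abs_dotProduct_le_norm_toLp_mul _ _)).trans ?_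
    exact mul_le_of_le_one_left (norm_nonneg _) (norm_le l)

end Euclidean

lemma abs_iSup_le {κ : Type*} [Finite κ] [Nonempty κ] {f : κ → ℝ} {δ : ℝ} (h : ∀ k, |f k| ≤ δ) :
    |⨆ k, f k| ≤ δ := by
  have := abs_iSup_sub_iSup_le (g := fun _ => 0) fun k => (sub_zero (f k)).symm ▸ h k
  rwa [ciSup_const, sub_zero] at this

lemma tendsto_iSup_of_tendsto {κ : Type*} [Finite κ] [Nonempty κ] {f : ℕ → κ → ℝ} {g : κ → ℝ}
    (h : ∀ k, Filter.Tendsto (fun n => f n k) Filter.atTop (nhds (g k))) :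
    Filter.Tendsto (fun n => ⨆ k, f n k) Filter.atTop (nhds (⨆ k, g k)) := by
  cases nonempty_fintype κ
  simp only [← Finset.sup'_univ_eq_ciSup]
  exact Filter.Tendsto.finset_sup'_nhds_apply Finset.univ_nonempty fun k _ => h k

section GaussianNorm

open WithLp (toLp)

variable {K M N : Type*} [Finite K] [Fintype M] [Fintype N]

lemma abs_iSup_dotProduct_le {κ : Type*} [Finite κ] [Nonempty κ] {u : κ → M → ℝ}
    (hu : ∀ l, u l ⬝ᵥ u l ≤ 1) (v : M → ℝ) : |⨆ l, u l ⬝ᵥ v| ≤ ‖toLp 2 v‖ := by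
  refine abs_iSup_le fun l => (abs_dotProduct_le_norm_toLp_mul _ _).trans ?_
  refine mul_le_of_le_one_left (norm_nonneg _) ((sq_le_one_iff₀ (norm_nonneg _)).1 ?_)
  rw [norm_toLp_sq]
  exact hu l

variable (M) in
lemma exists_seq_tendsto_iSup_mulVec : ∃ u : (n : ℕ) → Matrix (Fin (n + 1)) M ℝ,
    (∀ n l, (u n * (u n)ᵀ) l l ≤ 1) ∧ (∀ n v, |⨆ l, (u n *ᵥ v) l| ≤ ‖toLp 2 v‖) ∧
      ∀ v, Filter.Tendsto (fun n => ⨆ l, (u n *ᵥ v) l) Filter.atTop (nhds ‖toLp 2 v‖) :=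
  let ⟨u, hu, hlim⟩ := exists_seq_tendsto_iSup_dotProduct M
  ⟨fun _ => Matrix.of fun l => u l, fun _ l => hu l,
    fun _ => abs_iSup_dotProduct_le (u := fun l : Fin _ => u l) fun l => hu l, hlim⟩

lemma integrable_exp_mul_norm (t : ℝ) :
    Integrable (fun g => Real.exp (t * ‖toLp 2 g‖)) (stdGaussianPi M) :=
  (isLipschitz_norm_toLp.const_mul t).integrable_exp

theorem mgf_norm_le (t : ℝ) : mgf (fun g => ‖toLp 2 g‖) (stdGaussianPi M) t ≤
    Real.exp (t ^ 2 / 2 + t * ∫ g, ‖toLp 2 g‖ ∂stdGaussianPi M) := by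
  obtain ⟨u, hu, bound, hlim⟩ := exists_seq_tendsto_iSup_mulVec M
  have lip (n : ℕ) := isLipschitz_iSup_mulVec (u n)
  have mean := tendsto_integral_comp .id continuous_id lip isLipschitz_norm_toLp bound hlim
  have mgf := tendsto_integral_comp (HasExpGrowth.exp.comp (IsLipschitz.const_mul t ⟨1, .id⟩))
    (by fun_prop) lip isLipschitz_norm_toLp bound hlim
  exact le_of_tendsto_of_tendsto' mgf (((mean.const_mul t).const_add _).rexp) fun n =>
    mgf_iSup_mulVec_le t (hu n)

lemma isLipschitz_curry_mulVec (x : N → ℝ) :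
    IsLipschitz fun A : M × N → ℝ => Matrix.of A.curry *ᵥ x :=
  .of_linearMap
    { toFun := fun A : M × N → ℝ => Matrix.of A.curry *ᵥ x
      map_add' := fun A B => Matrix.add_mulVec (Matrix.of A.curry) (Matrix.of B.curry) x
      map_smul' := fun c A => Matrix.smul_mulVec c (Matrix.of A.curry) x }

lemma isLipschitz_iSup_norm_mulVec [Nonempty K] (r : ℝ) (x : K → N → ℝ) :
    IsLipschitz fun A : M × N → ℝ => ⨆ k, r * ‖toLp 2 (Matrix.of A.curry *ᵥ x k)‖ :=
  .iSup fun k => (isLipschitz_norm_toLp.comp (isLipschitz_curry_mulVec (x k))).const_mul r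

lemma integrable_exp_mul_iSup_norm_mulVec [Nonempty K] (r t : ℝ) (x : K → N → ℝ) :
    Integrable (fun A => Real.exp (t * ⨆ k, r * ‖toLp 2 (Matrix.of A.curry *ᵥ x k)‖))
      (stdGaussianPi (M × N)) :=
  ((isLipschitz_iSup_norm_mulVec r x).const_mul t).integrable_exp

theorem gordon_mgf_norm_le [Nonempty K] {r t : ℝ} (hr : |r| = 1) (ht : 0 ≤ t) {x : K → N → ℝ}
    (hx : ∀ k, x k ⬝ᵥ x k = 1) :
    mgf (fun A => ⨆ k, r * ‖toLp 2 (Matrix.of A.curry *ᵥ x k)‖) (stdGaussianPi (M × N)) t ≤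
      Real.exp (t ^ 2 / 2 + t * (r * (∫ g, ‖toLp 2 g‖ ∂stdGaussianPi M) +
        ∫ G, ⨆ k, r * (x k ⬝ᵥ G) ∂stdGaussianPi N)) := by
  obtain ⟨u, hu, bound, hlim⟩ := exists_seq_tendsto_iSup_mulVec M
  have mean := tendsto_integral_comp .id continuous_id (fun n => isLipschitz_iSup_mulVec (u n))
    isLipschitz_norm_toLp bound hlim
  have lip (n : ℕ) : IsLipschitz fun A : M × N → ℝ =>
      ⨆ k, r * ⨆ l, (u n *ᵥ (Matrix.of A.curry *ᵥ x k)) l :=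
    .iSup fun k => .const_mul r <|
      (isLipschitz_iSup_mulVec (u n)).comp (isLipschitz_curry_mulVec (x k))
  have sup_bound (n : ℕ) (A : M × N → ℝ) :
      |⨆ k, r * ⨆ l, (u n *ᵥ (Matrix.of A.curry *ᵥ x k)) l| ≤
        ⨆ k, 1 * ‖toLp 2 (Matrix.of A.curry *ᵥ x k)‖ := abs_iSup_le fun k => by
    rw [abs_mul, hr]
    exact (mul_le_mul_of_nonneg_left (bound n _) zero_le_one).trans
      (le_ciSup (f := fun k => 1 * ‖toLp 2 (Matrix.of A.curry *ᵥ x k)‖)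
        (Set.finite_range _).bddAbove k)
  have mgf := tendsto_integral_comp (HasExpGrowth.exp.comp (IsLipschitz.const_mul t ⟨1, .id⟩))
    (by fun_prop) lip (isLipschitz_iSup_norm_mulVec 1 x) sup_bound
    fun A => tendsto_iSup_of_tendsto fun k => (hlim _).const_mul r
  exact le_of_tendsto_of_tendsto' mgf
    (((((mean.const_mul r).add_const _).const_mul t).const_add _).rexp) fun n =>
      gordon_mgf_bilinear_le (x := Matrix.of x) hr ht (hu n) hx

lemma integrable_norm_toLp : Integrable (fun g => ‖toLp 2 g‖) (stdGaussianPi M) :=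
  isLipschitz_norm_toLp.integrable

lemma integral_norm_sq_stdGaussianPi :
    ∫ g, ‖toLp 2 g‖ ^ 2 ∂stdGaussianPi M = Fintype.card M := by
  have second_moment : ∫ s, s * s ∂gaussianReal 0 1 = 1 := by
    have := variance_id_gaussianReal (μ := 0) (v := 1)
    rw [variance_eq_integral aemeasurable_id] at this
    simpa [sq] using this
  have coord_integrable (i : M) : Integrable (fun g => g i * g i) (stdGaussianPi M) :=
    have growth : HasExpGrowth fun g : M → ℝ => g i := .of_isLipschitz ⟨1, .eval i⟩
    (growth.mul growth).integrable (by fun_prop)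
  simp only [norm_toLp_sq, dotProduct]
  rw [integral_finsetSum _ fun i _ => coord_integrable i]
  have (i : M) : ∫ g, g i * g i ∂stdGaussianPi M = 1 :=
    (integral_comp_eval (μ := fun _ : M => gaussianReal 0 1) (i := i) (f := fun s : ℝ => s * s)
      (by fun_prop)).trans second_moment
  simp [this]

lemma variance_norm_stdGaussianPi : Var[fun g => ‖toLp 2 g‖; stdGaussianPi M] =
    Fintype.card M - (∫ g, ‖toLp 2 g‖ ∂stdGaussianPi M) ^ 2 := by
  rw [← integral_norm_sq_stdGaussianPi]
  refine variance_eq_sub ?_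
  simpa using memLp_of_mem_interior_integrableExpSet
    (zero_mem_interior_integrableExpSet integrable_exp_mul_norm) 2

lemma integral_norm_le_sqrt_card :
    ∫ g, ‖toLp 2 g‖ ∂stdGaussianPi M ≤ Real.sqrt (Fintype.card M) := by
  refine Real.le_sqrt_of_sq_le ?_
  have := variance_nonneg (fun g => ‖toLp 2 g‖) (stdGaussianPi M)
  rw [variance_norm_stdGaussianPi] at this
  linarith

lemma abs_integral_norm_sub_sqrt_card_le :
    |∫ g, ‖toLp 2 g‖ ∂stdGaussianPi M - Real.sqrt (Fintype.card M)| ≤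
      1 / Real.sqrt (Fintype.card M) := by
  set μ := ∫ g, ‖toLp 2 g‖ ∂stdGaussianPi M
  set R := Real.sqrt (Fintype.card M)
  have upper : μ ≤ R := integral_norm_le_sqrt_card
  rw [abs_sub_comm, abs_of_nonneg (sub_nonneg.2 upper)]
  rcases (Real.sqrt_nonneg (Fintype.card M)).eq_or_lt with h | (hR : 0 < R)
  · have : 0 ≤ μ := integral_nonneg fun _ => norm_nonneg _
    have hR : R = 0 := h.symm
    simpa [hR] using this
  · have variance_le : R ^ 2 - μ ^ 2 ≤ 1 := by
      rw [Real.sq_sqrt (Nat.cast_nonneg _), ← variance_norm_stdGaussianPi]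
      exact variance_le_one_of_mgf_le integrable_exp_mul_norm mgf_norm_le
    have : 0 ≤ μ := integral_nonneg fun _ => norm_nonneg _
    rw [le_div_iff₀ hR]
    nlinarith

theorem integral_iSup_norm_mulVec_le [Nonempty K] {x : K → N → ℝ} (hx : ∀ k, x k ⬝ᵥ x k = 1) :
    ∫ A, ⨆ k, ‖toLp 2 (Matrix.of A.curry *ᵥ x k)‖ ∂stdGaussianPi (M × N) ≤
      Real.sqrt (Fintype.card M) + Real.sqrt (Fintype.card N) := by
  have width : ∫ G, ⨆ k, x k ⬝ᵥ G ∂stdGaussianPi N ≤ Real.sqrt (Fintype.card N) := by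
    refine (integral_mono (isLipschitz_iSup_mulVec (Matrix.of x)).integrable integrable_norm_toLp
      fun G => ?_).trans integral_norm_le_sqrt_card
    exact (le_abs_self _).trans (abs_iSup_dotProduct_le (fun k => (hx k).le) G)
  have integrable_exp (t : ℝ) := integrable_exp_mul_iSup_norm_mulVec (M := M) 1 t x
  have gordon := integral_le_of_mgf_le integrable_exp fun t ht =>
    gordon_mgf_norm_le abs_one ht.le hx
  simp only [one_mul] at gordon
  exact gordon.trans (add_le_add integral_norm_le_sqrt_card width)

end GaussianNorm

section Deviation

open WithLp (toLp)

variable {K M N : Type*} [Finite K] [Fintype M] [Fintype N]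

theorem measure_exists_lt_norm_mulVec_le_of_finite [Nonempty K] {r w t : ℝ} (hr : |r| = 1)
    (ht : 0 ≤ t) {x : K → N → ℝ} (hx : ∀ k, x k ⬝ᵥ x k = 1)
    (hw : ∫ G, ⨆ k, r * (x k ⬝ᵥ G) ∂stdGaussianPi N ≤ w) :
    stdGaussianPi (M × N) {A | ∃ k, w + 1 / Real.sqrt (Fintype.card M) + t <
        r * (‖toLp 2 (Matrix.of A.curry *ᵥ x k)‖ - Real.sqrt (Fintype.card M))} ≤
      ENNReal.ofReal (Real.exp (-t ^ 2 / 2)) := by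
  set R := Real.sqrt (Fintype.card M)
  let X : (M × N → ℝ) → ℝ := fun A => ⨆ k, r * ‖toLp 2 (Matrix.of A.curry *ᵥ x k)‖
  have mean_le : r * ∫ g, ‖toLp 2 g‖ ∂stdGaussianPi M ≤ r * R + 1 / R := by
    have : r * (∫ g, ‖toLp 2 g‖ ∂stdGaussianPi M - R) ≤ 1 / R := by
      refine (le_abs_self _).trans ?_
      rw [abs_mul, hr, one_mul]
      exact abs_integral_norm_sub_sqrt_card_le
    linarith
  have deviation_subset : {A | ∃ k, w + 1 / R + t < r * (‖toLp 2 (Matrix.of A.curry *ᵥ x k)‖ - R)}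
      ⊆ {A | r * R + 1 / R + w + t ≤ X A} := by
    rintro A ⟨k, hk⟩
    have : r * ‖toLp 2 (Matrix.of A.curry *ᵥ x k)‖ ≤ X A :=
      le_ciSup (f := fun k => r * ‖toLp 2 (Matrix.of A.curry *ᵥ x k)‖)
        (Set.finite_range _).bddAbove k
    change _ ≤ X A
    linarith
  refine (measure_mono deviation_subset).trans ?_
  rw [← ofReal_measureReal]
  refine ENNReal.ofReal_le_ofReal ?_
  calc _ ≤ Real.exp (-t * (r * R + 1 / R + w + t)) * mgf X (stdGaussianPi (M × N)) t :=
        measure_ge_le_exp_mul_mgf _ ht (integrable_exp_mul_iSup_norm_mulVec r t x)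
    _ ≤ Real.exp (-t * (r * R + 1 / R + w + t)) *
          Real.exp (t ^ 2 / 2 + t * (r * R + 1 / R + w)) := by
        gcongr
        refine (gordon_mgf_norm_le hr ht hx).trans ?_
        gcongr
    _ = Real.exp (-t ^ 2 / 2) := by
        rw [← Real.exp_add]
        ring_nf

theorem measure_exists_lt_norm_mulVec_le {r w t : ℝ} (hr : |r| = 1) (ht : 0 ≤ t)
    {S : Set (N → ℝ)} (hS : ∀ x ∈ S, x ⬝ᵥ x = 1)
    (hw : ∀ (n : ℕ) (x : Fin (n + 1) → S),
      ∫ G, ⨆ k, r * ((x k : N → ℝ) ⬝ᵥ G) ∂stdGaussianPi N ≤ w) :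
    stdGaussianPi (M × N) {A | ∃ x ∈ S, w + 1 / Real.sqrt (Fintype.card M) + t <
        r * (‖toLp 2 (Matrix.of A.curry *ᵥ x)‖ - Real.sqrt (Fintype.card M))} ≤
      ENNReal.ofReal (Real.exp (-t ^ 2 / 2)) := by
  set a := w + 1 / Real.sqrt (Fintype.card M) + t
  let dev (A : M × N → ℝ) (x : S) : ℝ :=
    r * (‖toLp 2 (Matrix.of A.curry *ᵥ (x : N → ℝ))‖ - Real.sqrt (Fintype.card M))
  rcases isEmpty_or_nonempty S with hempty | hne
  · have : S = ∅ := Set.isEmpty_coe_sort.1 hempty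
    simp [this]
  let d := TopologicalSpace.denseSeq S
  let E (n : ℕ) : Set (M × N → ℝ) := {A | ∃ k : Fin (n + 1), a < dev A (d k)}
  have mono : Monotone E := by
    rintro p q hpq A ⟨k, hk⟩
    exact ⟨⟨k, by omega⟩, hk⟩
  have dense_subset : {A | ∃ x ∈ S, a < r * (‖toLp 2 (Matrix.of A.curry *ᵥ x)‖ -
      Real.sqrt (Fintype.card M))} ⊆ ⋃ n, E n := by
    rintro A ⟨x, hx, hxa⟩
    have hopen : IsOpen {y | a < dev A y} := isOpen_lt continuous_const (by fun_prop)
    obtain ⟨n, hn⟩ := (TopologicalSpace.denseRange_denseSeq S).exists_mem_open hopen ⟨⟨x, hx⟩, hxa⟩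
    exact Set.mem_iUnion.2 ⟨n, Fin.last n, hn⟩
  refine (measure_mono dense_subset).trans ?_
  rw [mono.measure_iUnion]
  refine iSup_le fun n => ?_
  have unit (k : Fin (n + 1)) : (d k : N → ℝ) ⬝ᵥ (d k : N → ℝ) = 1 := hS _ (d k).2
  exact measure_exists_lt_norm_mulVec_le_of_finite hr ht unit (hw n fun k => d k)

end Deviation

section SingularValues

variable {n₁ n₂ : ℕ}

lemma frobNorm_sq (X : Matrix (Fin n₁) (Fin n₂) ℝ) : frobNorm X ^ 2 = ∑ i, ∑ j, X i j ^ 2 :=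
  Real.sq_sqrt (by positivity)

lemma frobNorm_nonneg (X : Matrix (Fin n₁) (Fin n₂) ℝ) : 0 ≤ frobNorm X :=
  Real.sqrt_nonneg _

lemma frobNorm_pos {X : Matrix (Fin n₁) (Fin n₂) ℝ} (hX : X ≠ 0) : 0 < frobNorm X := by
  obtain ⟨i, j, hij⟩ : ∃ i j, X i j ≠ 0 := by
    by_contra! h
    exact hX (Matrix.ext h)
  refine Real.sqrt_pos.2 (Finset.sum_pos' (fun i _ => by positivity) ⟨i, Finset.mem_univ i, ?_⟩)
  exact Finset.sum_pos' (fun j _ => by positivity) ⟨j, Finset.mem_univ j, by positivity⟩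

lemma singVals_sq (X : Matrix (Fin n₁) (Fin n₂) ℝ) (i : Fin n₁) :
    singVals X i ^ 2 = (Matrix.isHermitian_mul_conjTranspose_self X).eigenvalues i :=
  Real.sq_sqrt ((Matrix.posSemidef_self_mul_conjTranspose X).eigenvalues_nonneg i)

lemma sum_singVals_sq (X : Matrix (Fin n₁) (Fin n₂) ℝ) :
    ∑ i, singVals X i ^ 2 = frobNorm X ^ 2 := by
  have trace := (Matrix.isHermitian_mul_conjTranspose_self X).trace_eq_sum_eigenvalues
  simp only [RCLike.ofReal_real_eq_id, id_eq] at trace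
  simp only [singVals_sq, frobNorm_sq, ← trace]
  simp [Matrix.trace, Matrix.mul_apply, sq]

lemma lstarRank_le_rank (X : Matrix (Fin n₁) (Fin n₂) ℝ) : lstarRank X ≤ X.rank := by
  classical
  set support := Finset.univ.filter fun i => singVals X i ≠ 0
  have rank_eq : X.rank = support.card := by
    rw [← Matrix.rank_self_mul_conjTranspose,
      (Matrix.isHermitian_mul_conjTranspose_self X).rank_eq_card_non_zero_eigs,
      Fintype.card_subtype]
    simp only [← singVals_sq, ne_eq, sq_eq_zero_iff, support]
  refine div_le_of_le_mul₀ (by positivity) (by positivity) ?_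
  calc nuclearNorm X ^ 2 = (∑ i ∈ support, singVals X i) ^ 2 := by
        rw [Finset.sum_filter_ne_zero, nuclearNorm]
    _ ≤ support.card * ∑ i ∈ support, singVals X i ^ 2 := sq_sum_le_card_mul_sum_sq
    _ ≤ X.rank * frobNorm X ^ 2 := by
        rw [rank_eq, ← sum_singVals_sq]
        gcongr
        exact Finset.subset_univ support

lemma exists_eq_norm_smul_unit {N : Type*} [Fintype N] [Nonempty N] (z : N → ℝ) :
    ∃ v : N → ℝ, v ⬝ᵥ v = 1 ∧ z = Real.sqrt (z ⬝ᵥ z) • v := by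
  classical
  rcases eq_or_ne z 0 with rfl | hz
  · exact ⟨Pi.single (Classical.arbitrary N) 1, by simp, by simp⟩
  · have pos : 0 < z ⬝ᵥ z := by simpa using Matrix.dotProduct_star_self_pos_iff.2 hz
    have root_ne := (Real.sqrt_pos.2 pos).ne'
    refine ⟨(Real.sqrt (z ⬝ᵥ z))⁻¹ • z, ?_, (smul_inv_smul₀ root_ne z).symm⟩
    rw [smul_dotProduct, dotProduct_smul, smul_smul, smul_eq_mul, ← mul_inv,
      Real.mul_self_sqrt pos.le, inv_mul_cancel₀ pos.ne']

theorem exists_singVals_decomposition [NeZero n₂] (X : Matrix (Fin n₁) (Fin n₂) ℝ) :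
    ∃ (W : Matrix (Fin n₁) (Fin n₁) ℝ) (V : Matrix (Fin n₁) (Fin n₂) ℝ),
      (∀ i, W i ⬝ᵥ W i = 1) ∧ (∀ i, V i ⬝ᵥ V i = 1) ∧
        X = Wᵀ * Matrix.diagonal (singVals X) * V := by
  set hH := Matrix.isHermitian_mul_conjTranspose_self X
  let W : Matrix (Fin n₁) (Fin n₁) ℝ := (hH.eigenvectorUnitary : Matrix _ _ ℝ)ᵀ
  have left_inv : W * Wᵀ = 1 := by
    have := Unitary.coe_star_mul_self hH.eigenvectorUnitary
    rwa [Matrix.star_eq_conjTranspose, Matrix.conjTranspose_eq_transpose_of_trivial] at this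
  have gram (i : Fin n₁) : (W * X) i ⬝ᵥ (W * X) i = hH.eigenvalues i := by
    rw [hH.eigenvalues_eq, ← hH.eigenvectorUnitary_transpose_apply]
    change _ = W i ⬝ᵥ ((X * Xᴴ) *ᵥ W i)
    rw [Matrix.conjTranspose_eq_transpose_of_trivial, ← Matrix.mulVec_mulVec,
      Matrix.dotProduct_mulVec, Matrix.mulVec_transpose]
    rfl
  choose v unit hv using fun i => exists_eq_norm_smul_unit ((W * X) i)
  refine ⟨W, Matrix.of v, fun i => ?_, unit, ?_⟩
  · exact (congrFun (congrFun left_inv i) i).trans (Matrix.one_apply_eq i)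
  · have scaled_rows : Matrix.diagonal (singVals X) * Matrix.of v = W * X := by
      ext i j
      rw [Matrix.diagonal_mul, hv i, gram]
      rfl
    rw [Matrix.mul_assoc, scaled_rows, ← Matrix.mul_assoc, mul_eq_one_comm.1 left_inv,
      Matrix.one_mul]

end SingularValues

section LStarSphere

open WithLp (toLp)

variable {m n₁ n₂ : ℕ}

/-- The matrix `X / ‖X‖_F`, read as a vector indexed by the entries. -/
def normalizedVec (X : Matrix (Fin n₁) (Fin n₂) ℝ) : Fin n₁ × Fin n₂ → ℝ :=
  (frobNorm X)⁻¹ • fun p => X p.1 p.2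

lemma normalizedVec_dotProduct_self {X : Matrix (Fin n₁) (Fin n₂) ℝ} (hX : X ≠ 0) :
    normalizedVec X ⬝ᵥ normalizedVec X = 1 := by
  have hF := frobNorm_pos hX
  have sum_sq : (fun p : Fin n₁ × Fin n₂ => X p.1 p.2) ⬝ᵥ (fun p => X p.1 p.2) =
      frobNorm X ^ 2 := by
    rw [frobNorm_sq]
    simp only [dotProduct, Fintype.sum_prod_type, sq]
  simp only [normalizedVec, smul_dotProduct, dotProduct_smul, sum_sq, smul_eq_mul]
  field_simp

/-- The nonzero matrices of `ℓ*`-rank at most `τ`, normalized in Frobenius norm. -/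
def lstarSphere (n₁ n₂ : ℕ) (τ : ℝ) : Set (Fin n₁ × Fin n₂ → ℝ) :=
  normalizedVec '' {X | X ≠ 0 ∧ lstarRank X ≤ τ}

lemma sum_singVals_mul_bilinear {W : Matrix (Fin n₁) (Fin n₁) ℝ} {V : Matrix (Fin n₁) (Fin n₂) ℝ}
    (s : Fin n₁ → ℝ) (G : Fin n₁ × Fin n₂ → ℝ) :
    (fun p : Fin n₁ × Fin n₂ => (Wᵀ * Matrix.diagonal s * V) p.1 p.2) ⬝ᵥ G =
      ∑ i, s i * (W i ⬝ᵥ (Matrix.of G.curry *ᵥ V i)) := by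
  simp only [dotProduct, Matrix.mulVec, Matrix.mul_apply (M := Wᵀ * Matrix.diagonal s),
    Matrix.mul_diagonal, Matrix.transpose_apply, Fintype.sum_prod_type, Finset.sum_mul,
    Finset.mul_sum, Matrix.of_apply, Function.curry_apply]
  simp_rw [Finset.sum_comm (s := (Finset.univ : Finset (Fin n₂)))]
  rw [Finset.sum_comm]
  refine Finset.sum_congr rfl fun i _ => Finset.sum_congr rfl fun a _ =>
    Finset.sum_congr rfl fun b _ => ?_
  ring

/-- The vectors `V i` are the right singular vectors of `X`: in the duality with the nuclear norm of
`X`, the operator norm of `G` matters on them only. -/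
lemma exists_unit_abs_normalizedVec_dotProduct_le [NeZero n₂] (X : Matrix (Fin n₁) (Fin n₂) ℝ) :
    ∃ V : Fin n₁ → Fin n₂ → ℝ, (∀ i, V i ⬝ᵥ V i = 1) ∧
      ∀ (G : Fin n₁ × Fin n₂ → ℝ) (c : ℝ), (∀ i, ‖toLp 2 (Matrix.of G.curry *ᵥ V i)‖ ≤ c) →
        |normalizedVec X ⬝ᵥ G| ≤ Real.sqrt (lstarRank X) * c := by
  obtain ⟨W, V, unit_W, unit_V, hX⟩ := exists_singVals_decomposition X
  have singVals_nonneg (i : Fin n₁) : 0 ≤ singVals X i := Real.sqrt_nonneg _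
  have ratio : Real.sqrt (lstarRank X) = (frobNorm X)⁻¹ * nuclearNorm X := by
    rw [lstarRank, ← div_pow, Real.sqrt_sq, div_eq_inv_mul]
    exact div_nonneg (Finset.sum_nonneg fun i _ => singVals_nonneg i) (frobNorm_nonneg X)
  refine ⟨V, unit_V, fun G c hc => ?_⟩
  have term_le (i : Fin n₁) : |W i ⬝ᵥ (Matrix.of G.curry *ᵥ V i)| ≤ c := by
    refine (abs_dotProduct_le_norm_toLp_mul _ _).trans ?_
    have : ‖toLp 2 (W i)‖ = 1 := by
      rw [← sq_eq_sq₀ (norm_nonneg _) zero_le_one, norm_toLp_sq, unit_W, one_pow]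
    rw [this, one_mul]
    exact hc i
  rw [normalizedVec, smul_dotProduct, smul_eq_mul, abs_mul, abs_inv,
    abs_of_nonneg (frobNorm_nonneg X), ratio, mul_assoc]
  refine mul_le_mul_of_nonneg_left ?_ (inv_nonneg.2 (frobNorm_nonneg X))
  calc |(fun p : Fin n₁ × Fin n₂ => X p.1 p.2) ⬝ᵥ G|
      = |∑ i, singVals X i * (W i ⬝ᵥ (Matrix.of G.curry *ᵥ V i))| := by
        rw [← sum_singVals_mul_bilinear, ← hX]
    _ ≤ ∑ i, singVals X i * |W i ⬝ᵥ (Matrix.of G.curry *ᵥ V i)| := by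
        refine (Finset.abs_sum_le_sum_abs _ _).trans_eq (Finset.sum_congr rfl fun i _ => ?_)
        rw [abs_mul, abs_of_nonneg (singVals_nonneg i)]
    _ ≤ ∑ i, singVals X i * c :=
        Finset.sum_le_sum fun i _ => mul_le_mul_of_nonneg_left (term_le i) (singVals_nonneg i)
    _ = nuclearNorm X * c := by rw [← Finset.sum_mul, nuclearNorm]

theorem integral_iSup_lstarSphere_le [NeZero n₁] [NeZero n₂] {τ r : ℝ} (hr : |r| = 1)
    {K : Type*} [Finite K] [Nonempty K] (x : K → lstarSphere n₁ n₂ τ) :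
    ∫ G, ⨆ k, r * ((x k : Fin n₁ × Fin n₂ → ℝ) ⬝ᵥ G) ∂stdGaussianPi (Fin n₁ × Fin n₂) ≤
      Real.sqrt τ * (Real.sqrt n₁ + Real.sqrt n₂) := by
  choose X hX hXx using fun k => (x k).2
  choose V unit hV using fun k => exists_unit_abs_normalizedVec_dotProduct_le (X k)
  let S (G : Fin n₁ × Fin n₂ → ℝ) : ℝ :=
    ⨆ q : K × Fin n₁, ‖toLp 2 (Matrix.of G.curry *ᵥ V q.1 q.2)‖
  have le_S (G : Fin n₁ × Fin n₂ → ℝ) (k : K) (i : Fin n₁) :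
      ‖toLp 2 (Matrix.of G.curry *ᵥ V k i)‖ ≤ S G :=
    le_ciSup (f := fun q : K × Fin n₁ => ‖toLp 2 (Matrix.of G.curry *ᵥ V q.1 q.2)‖)
      (Set.finite_range _).bddAbove (k, i)
  have S_nonneg (G : Fin n₁ × Fin n₂ → ℝ) : 0 ≤ S G := Real.iSup_nonneg fun _ => norm_nonneg _
  have pointwise (G : Fin n₁ × Fin n₂ → ℝ) :
      ⨆ k, r * ((x k : Fin n₁ × Fin n₂ → ℝ) ⬝ᵥ G) ≤ Real.sqrt τ * S G := ciSup_le fun k => by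
    calc r * ((x k : Fin n₁ × Fin n₂ → ℝ) ⬝ᵥ G)
        ≤ |normalizedVec (X k) ⬝ᵥ G| := by
          rw [hXx, ← one_mul |_|, ← hr, ← abs_mul]
          exact le_abs_self _
      _ ≤ Real.sqrt (lstarRank (X k)) * S G := hV k G _ (le_S G k)
      _ ≤ Real.sqrt τ * S G :=
          mul_le_mul_of_nonneg_right (Real.sqrt_le_sqrt (hX k).2) (S_nonneg G)
  have lip_width : IsLipschitz fun G => ⨆ k, r * ((x k : Fin n₁ × Fin n₂ → ℝ) ⬝ᵥ G) :=
    .iSup fun k => (isLipschitz_mulVec_apply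
      (Matrix.of fun k => (x k : Fin n₁ × Fin n₂ → ℝ)) k).const_mul r
  have lip_S : IsLipschitz S := by
    simpa only [one_mul] using isLipschitz_iSup_norm_mulVec 1 fun q : K × Fin n₁ => V q.1 q.2
  have chevet := integral_iSup_norm_mulVec_le (M := Fin n₁) fun q : K × Fin n₁ => unit q.1 q.2
  simp only [Fintype.card_fin] at chevet
  calc _ ≤ ∫ G, Real.sqrt τ * S G ∂stdGaussianPi (Fin n₁ × Fin n₂) :=
        integral_mono lip_width.integrable (lip_S.integrable.const_mul _) pointwise
    _ ≤ _ := by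
        rw [integral_const_mul]
        exact mul_le_mul_of_nonneg_left chevet (Real.sqrt_nonneg _)

lemma vnorm_eq_norm_toLp (v : Fin m → ℝ) : vnorm v = ‖toLp 2 v‖ := by
  simp only [vnorm, EuclideanSpace.norm_eq, Real.norm_eq_abs, sq_abs]

lemma mulVec_normalizedVec (ω : Fin m × Fin n₁ × Fin n₂ → ℝ) (X : Matrix (Fin n₁) (Fin n₂) ℝ) :
    Matrix.of ω.curry *ᵥ normalizedVec X = (frobNorm X)⁻¹ • opOf (ensembleMatrices ω) X := by
  rw [normalizedVec, Matrix.mulVec_smul]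
  congr 1 with k
  simp only [Matrix.mulVec, dotProduct, Matrix.of_apply, Function.curry_apply,
    Fintype.sum_prod_type, opOf, matInner, ensembleMatrices, Matrix.trace, Matrix.diag_apply,
    Matrix.mul_apply, Matrix.transpose_apply]
  exact Finset.sum_comm

lemma vnorm_scaledOp_div_frobNorm (ω : Fin m × Fin n₁ × Fin n₂ → ℝ)
    (X : Matrix (Fin n₁) (Fin n₂) ℝ) : vnorm (scaledOp ω X) / frobNorm X =
      ‖toLp 2 (Matrix.of ω.curry *ᵥ normalizedVec X)‖ / Real.sqrt m := by
  have scaled : scaledOp ω X = (Real.sqrt m)⁻¹ • opOf (ensembleMatrices ω) X := by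
    ext k
    exact div_eq_inv_mul _ _
  rw [mulVec_normalizedVec, scaled, vnorm_eq_norm_toLp, WithLp.toLp_smul, WithLp.toLp_smul,
    norm_smul, norm_smul, Real.norm_of_nonneg (inv_nonneg.2 (Real.sqrt_nonneg _)),
    Real.norm_of_nonneg (inv_nonneg.2 (frobNorm_nonneg X))]
  ring

end LStarSphere

section GaussianEnsemble

variable {m n₁ n₂ : ℕ}

lemma exists_ne_zero_lstarRank_le_one [NeZero n₁] [NeZero n₂] :
    ∃ X : Matrix (Fin n₁) (Fin n₂) ℝ, X ≠ 0 ∧ lstarRank X ≤ 1 := by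
  refine ⟨Matrix.vecMulVec (fun _ => 1) (fun _ => 1), fun h => ?_, ?_⟩
  · exact one_ne_zero ((mul_one 1).symm.trans (congrFun (congrFun h 0) 0))
  · exact (lstarRank_le_rank _).trans (Nat.cast_le_one.2 (Matrix.rank_vecMulVec_le _ _))

lemma one_le_natCast_max [NeZero n₁] : (1 : ℝ) ≤ (max n₁ n₂ : ℕ) := by
  exact_mod_cast le_max_of_le_left (Nat.one_le_iff_ne_zero.2 (NeZero.ne n₁))

lemma one_le_sqrt_of_le [NeZero n₁] {τ ε : ℝ} (hτ : 1 ≤ τ) (hε : 0 < ε)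
    (hm : 36 * τ * (max n₁ n₂ : ℕ) / ε ^ 2 ≤ m) : 1 ≤ Real.sqrt m := by
  have max_pos := zero_lt_one.trans_le (one_le_natCast_max (n₁ := n₁) (n₂ := n₂))
  have m_pos : (0 : ℝ) < m := lt_of_lt_of_le (by positivity) hm
  exact Real.one_le_sqrt.2 (by exact_mod_cast m_pos)

lemma sqrt_mul_add_one_div_sqrt_le [NeZero n₁] {τ ε : ℝ} (hτ : 1 ≤ τ) (hε : 0 < ε)
    (hm : 36 * τ * (max n₁ n₂ : ℕ) / ε ^ 2 ≤ m) :
    Real.sqrt τ * (Real.sqrt n₁ + Real.sqrt n₂) + 1 / Real.sqrt m ≤ ε * Real.sqrt m / 2 := by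
  set p := Real.sqrt (max n₁ n₂ : ℕ)
  have one_le_prod : 1 ≤ Real.sqrt τ * p :=
    one_le_mul_of_one_le_of_one_le (Real.one_le_sqrt.2 hτ)
      (Real.one_le_sqrt.2 one_le_natCast_max)
  have sqrt_sum_le : Real.sqrt τ * (Real.sqrt n₁ + Real.sqrt n₂) ≤ Real.sqrt τ * (p + p) := by
    refine mul_le_mul_of_nonneg_left (add_le_add ?_ ?_) (Real.sqrt_nonneg _)
    · exact Real.sqrt_le_sqrt (Nat.cast_le.2 (le_max_left _ _))
    · exact Real.sqrt_le_sqrt (Nat.cast_le.2 (le_max_right _ _))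
  have inv_le : 1 / Real.sqrt m ≤ 1 := by
    rw [one_div]
    exact inv_le_one_of_one_le₀ (one_le_sqrt_of_le hτ hε hm)
  have six_mul_le : 6 * (Real.sqrt τ * p) ≤ ε * Real.sqrt m := by
    rw [div_le_iff₀ (by positivity)] at hm
    refine abs_le_of_sq_le_sq' ?_ (by positivity) |>.2
    simp only [mul_pow, p, Real.sq_sqrt (Nat.cast_nonneg _), Real.sq_sqrt (zero_le_one.trans hτ)]
    linarith
  linarith

theorem measure_exists_lt_vnorm_scaledOp_le [NeZero n₁] [NeZero n₂] {r τ ε : ℝ} (hr : |r| = 1)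
    (hτ : 1 ≤ τ) (hε : 0 < ε) (hm : 36 * τ * (max n₁ n₂ : ℕ) / ε ^ 2 ≤ m) :
    gaussianEnsemble m n₁ n₂ {ω | ∃ X, X ≠ 0 ∧ lstarRank X ≤ τ ∧
        ε < r * (vnorm (scaledOp ω X) / frobNorm X - 1)} ≤
      ENNReal.ofReal (Real.exp (-(m : ℝ) * ε ^ 2 / 8)) := by
  have deviation := measure_exists_lt_norm_mulVec_le (M := Fin m) (t := ε * Real.sqrt m / 2) hr
    (by positivity) (S := lstarSphere n₁ n₂ τ)
    (by rintro _ ⟨X, hX, rfl⟩; exact normalizedVec_dotProduct_self hX.1)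
    fun _ x => integral_iSup_lstarSphere_le hr x
  rw [Fintype.card_fin] at deviation
  have exponent : -(ε * Real.sqrt m / 2) ^ 2 / 2 = -(m : ℝ) * ε ^ 2 / 8 := by
    rw [div_pow, mul_pow, Real.sq_sqrt m.cast_nonneg]
    ring
  rw [exponent] at deviation
  refine (measure_mono ?_).trans deviation
  rintro ω ⟨X, hX, hrank, hlt⟩
  refine ⟨normalizedVec X, ⟨X, ⟨hX, hrank⟩, rfl⟩, ?_⟩
  have sqrt_pos := zero_lt_one.trans_le (one_le_sqrt_of_le hτ hε hm)
  have scaled := mul_lt_mul_of_pos_right hlt sqrt_pos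
  rw [vnorm_scaledOp_div_frobNorm, mul_assoc, sub_mul, one_mul, div_mul_cancel₀ _ sqrt_pos.ne']
    at scaled
  have threshold := sqrt_mul_add_one_div_sqrt_le (n₂ := n₂) hτ hε hm
  linarith

end GaussianEnsemble

theorem stmt15_general {m n₁ n₂ : ℕ} (hn₁ : 0 < n₁) (hn₂ : 0 < n₂) {τ ε : ℝ} (hτ : 1 ≤ τ)
    (hε : 0 < ε) (hm : 36 * τ * (max n₁ n₂ : ℕ) / ε ^ 2 ≤ m) :
    gaussianEnsemble m n₁ n₂ {ω | 1 + ε < cmsvMax (scaledOp ω) τ} ≤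
      ENNReal.ofReal (Real.exp (-(m : ℝ) * ε ^ 2 / 8)) ∧
    gaussianEnsemble m n₁ n₂ {ω | cmsvMin (scaledOp ω) τ < 1 - ε} ≤
      ENNReal.ofReal (Real.exp (-(m : ℝ) * ε ^ 2 / 8)) := by
  have : NeZero n₁ := ⟨hn₁.ne'⟩
  have : NeZero n₂ := ⟨hn₂.ne'⟩
  obtain ⟨X₀, hX₀, rank_X₀⟩ := exists_ne_zero_lstarRank_le_one (n₁ := n₁) (n₂ := n₂)
  have values_nonempty (ω : Fin m × Fin n₁ × Fin n₂ → ℝ) : {c | ∃ X, X ≠ 0 ∧ lstarRank X ≤ τ ∧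
      c = vnorm (scaledOp ω X) / frobNorm X}.Nonempty :=
    ⟨_, X₀, hX₀, rank_X₀.trans hτ, rfl⟩
  constructor
  · refine (measure_mono fun ω hω => ?_).trans
      (measure_exists_lt_vnorm_scaledOp_le abs_one hτ hε hm)
    obtain ⟨_, ⟨X, hX, rank_X, rfl⟩, hlt⟩ :=
      exists_lt_of_lt_csSup (values_nonempty ω) hω
    exact ⟨X, hX, rank_X, by linarith⟩
  · refine (measure_mono fun ω hω => ?_).trans
      (measure_exists_lt_vnorm_scaledOp_le (r := -1) (by norm_num) hτ hε hm)
    obtain ⟨_, ⟨X, hX, rank_X, rfl⟩, hlt⟩ :=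
      exists_lt_of_csInf_lt (values_nonempty ω) hω
    exact ⟨X, hX, rank_X, by linarith⟩

/-- for the Gaussian ensemble, if `m ≥ 36 τ n₂ / ε²` then the ℓ*-constrained
singular values of `𝒜/√m` concentrate around `1`. -/
theorem stmt15 {m n₁ n₂ : ℕ} (hn : n₁ ≤ n₂) (τ : ℝ) (hτ1 : 1 ≤ τ) (hτ2 : τ ≤ (n₁ : ℝ))
    (ε : ℝ) (hε0 : 0 < ε) (hε1 : ε < 1) (hm : 36 * τ * n₂ / ε ^ 2 ≤ (m : ℝ)) :
    gaussianEnsemble m n₁ n₂ {ω | 1 + ε < cmsvMax (scaledOp ω) τ} ≤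
      ENNReal.ofReal (Real.exp (-(m : ℝ) * ε ^ 2 / 8)) ∧
    gaussianEnsemble m n₁ n₂ {ω | cmsvMin (scaledOp ω) τ < 1 - ε} ≤
      ENNReal.ofReal (Real.exp (-(m : ℝ) * ε ^ 2 / 8)) := by
  have hn₁ : 0 < n₁ := by exact_mod_cast zero_lt_one.trans_le (hτ1.trans hτ2)
  exact stmt15_general hn₁ (hn₁.trans_le hn) hτ1 hε0 (by rwa [max_eq_right hn])

end
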